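/- arXiv:1601.05622 — 4 statements merged into one kernel-verified Lean document; each statement's English description precedes it below -/
import Mathlib

section
/- Let (R,m) be a Noetherian local ring of dimension d≥1, let I_1,…,I_s be m-primary ideals and set I = I_1⋯I_s. Then Σ_{α∈ℕ^s, |α|=d} d!·e_α({I^n})/(α_1!⋯α_s!) = e_0(I) and e_{(0,…,0)}({I^n}) = e_d(I). -/
/-! Common definitions for multigraded filtrations of ideals
(following Sarkar–Verma, "Postulation and reduction vectors of
multigraded filtrations of ideals"). -/

open Finset IsLocalRing

/-- The vector `e = (1,…,1) ∈ ℤˢ`. -/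
def evec (s : ℕ) : Fin s → ℤ := fun _ => 1

/-- `n⁺`, the componentwise positive part of a vector. -/
def vplus {s : ℕ} (n : Fin s → ℤ) : Fin s → ℤ := fun i => max (n i) 0

/-- `I^n = I₁^{n₁} ⋯ I_s^{n_s}` with the convention `I_i^{n_i} = R` for `n_i ≤ 0`. -/
def prodPow {R : Type*} [CommRing R] {s : ℕ} (I : Fin s → Ideal R) (n : Fin s → ℤ) : Ideal R :=
  ∏ i, I i ^ (n i).toNat

/-- An ideal is `m`-primary iff it is proper and contains a power of the maximal ideal. -/
def IsMPrimary (R : Type*) [CommRing R] [IsLocalRing R] (I : Ideal R) : Prop :=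
  I ≠ ⊤ ∧ maximalIdeal R ≤ I.radical

/-- A Cohen–Macaulay local ring: some system of parameters (a regular sequence of
length equal to the Krull dimension inside the maximal ideal) exists. -/
def IsCMLocal (R : Type*) [CommRing R] [IsLocalRing R] : Prop :=
  ∃ rs : List R, (∀ x ∈ rs, x ∈ maximalIdeal R) ∧ RingTheory.Sequence.IsRegular R rs ∧
    (rs.length : WithBot ℕ∞) = ringKrullDim R

/-- A `ℤˢ`-graded `I`-admissible filtration of ideals.  Admissibility (finiteness of the
extended Rees ring `R'(F)` as a module over `R'(I)`) is recorded through the equivalent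
condition that `F(n + m) = I^n F(m)` for all `n ≥ 0`, for a suitable fixed `m ≥ 0`. -/
structure AdmissibleFiltration (R : Type*) [CommRing R] (s : ℕ) (I : Fin s → Ideal R) where
  F : (Fin s → ℤ) → Ideal R
  prodPow_le : ∀ n, prodPow I n ≤ F n
  mul_le : ∀ m n, F m * F n ≤ F (m + n)
  antitone : ∀ m n : Fin s → ℤ, m ≤ n → F n ≤ F m
  plus_eq : ∀ n, F n = F (vplus n)
  admissible : ∃ m : Fin s → ℤ, 0 ≤ m ∧
    ∀ n : Fin s → ℤ, 0 ≤ n → F (n + m) = prodPow I n * F m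

/-- The length `λ_R(M)` of a module, as an integer (the longest chain of submodules;
this is the usual length for modules of finite length). -/
noncomputable def lenI (R M : Type*) [CommRing R] [AddCommGroup M] [Module R M] : ℤ :=
  (((Order.krullDim (Submodule R M)).unbotD 0).toNat : ℤ)

/-- The Hilbert function `H_F(n) = λ(R/F(n))` of a filtration. -/
noncomputable def hilbFn {R : Type*} [CommRing R] {s : ℕ} {I : Fin s → Ideal R}
    (F : AdmissibleFiltration R s I) (n : Fin s → ℤ) : ℤ :=
  lenI R (R ⧸ F.F n)

/-- The multigraded Hilbert polynomial with coefficient data `c = (e_α)`: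
`P(n) = Σ_{|α| ≤ d} (−1)^{d−|α|} e_α ∏ᵢ binom(nᵢ+αᵢ−1, αᵢ)`. -/
noncomputable def hilbPoly (s d : ℕ) (c : (Fin s → ℕ) → ℤ) (n : Fin s → ℤ) : ℤ :=
  ∑ α ∈ Finset.univ.filter (fun α : Fin s → Fin (d+1) => (∑ i, (α i : ℕ)) ≤ d),
    (-1)^(d - ∑ i, (α i : ℕ)) * c (fun i => (α i : ℕ)) *
      ∏ i, Ring.choose (n i + ((α i : ℕ) : ℤ) - 1) (α i : ℕ)

/-- `c : (Fin s → ℕ) → ℤ` is the family of Hilbert coefficients of `F`: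
the corresponding polynomial agrees with the Hilbert function for all large `n`. -/
noncomputable def IsHilbCoeffs {R : Type*} [CommRing R] {s : ℕ} {I : Fin s → Ideal R}
    (F : AdmissibleFiltration R s I) (d : ℕ) (c : (Fin s → ℕ) → ℤ) : Prop :=
  ∃ N : ℕ, ∀ n : Fin s → ℤ, (∀ i, (N : ℤ) ≤ n i) → hilbPoly s d c n = hilbFn F n

/-- The Samuel polynomial `P_a(n) = Σ_{i=0}^{d} (−1)^i e_i binom(n+d−1−i, d−i)` with
coefficient data `c = (e_i)`. -/
noncomputable def samuelPoly (d : ℕ) (c : ℕ → ℤ) (n : ℤ) : ℤ :=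
  ∑ i ∈ Finset.range (d + 1), (-1)^i * c i * Ring.choose (n + (d : ℤ) - 1 - (i : ℤ)) (d - i)

/-- `c` is the family of Hilbert coefficients of the `m`-primary ideal `a`. -/
noncomputable def IsSamuelCoeffs {R : Type*} [CommRing R] (a : Ideal R) (d : ℕ)
    (c : ℕ → ℤ) : Prop :=
  ∃ N : ℕ, ∀ n : ℕ, N ≤ n → samuelPoly d c (n : ℤ) = lenI R (R ⧸ a ^ n)

section Reductions

variable {R : Type*} [CommRing R] {s d : ℕ} {I : Fin s → Ideal R}

/-- The ideal `J = (y₁,…,y_d)` of a complete reduction datum, where `y_j = x_{1j}⋯x_{sj}`. -/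
def crIdeal (x : Fin s → Fin d → R) : Ideal R :=
  Ideal.span (Set.range fun j => ∏ i, x i j)

/-- `A = {x_{ij} ∈ I_i}` is a complete reduction of `F`: `J·F(n) = F(n+e)` for all large `n`. -/
def IsCompleteReduction (F : AdmissibleFiltration R s I) (x : Fin s → Fin d → R) : Prop :=
  (∀ i j, x i j ∈ I i) ∧
  ∃ N : ℕ, ∀ n : Fin s → ℤ, (∀ i, (N : ℤ) ≤ n i) →
    crIdeal x * F.F n = F.F (n + evec s)

/-- A good complete reduction: in addition `F(m) ∩ (y₁) = y₁ F(m−e)` for all large `m`. -/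
def IsGoodCompleteReduction (F : AdmissibleFiltration R s I) (x : Fin s → Fin d → R) : Prop :=
  IsCompleteReduction F x ∧
  ∀ h : 0 < d, ∃ N : ℕ, ∀ m : Fin s → ℤ, (∀ i, (N : ℤ) ≤ m i) →
    F.F m ⊓ Ideal.span {∏ i, x i ⟨0, h⟩} =
      Ideal.span {∏ i, x i ⟨0, h⟩} * F.F (m - evec s)

end Reductions

/-- The first difference operator `Δ¹ f (n) = f(n+e) − f(n)`; `Δ^k` is its `k`-th iterate. -/
def deltaOp {s : ℕ} (f : (Fin s → ℤ) → ℤ) : (Fin s → ℤ) → ℤ :=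
  fun n => f (n + evec s) - f n

/-- The Ratliff–Rush closure filtration `F̆(n) = ⋃_{k ≥ 1} (F(n+ke) : F(e)^k)`. -/
def ratliffRush {R : Type*} [CommRing R] {s : ℕ} {I : Fin s → Ideal R}
    (F : AdmissibleFiltration R s I) (n : Fin s → ℤ) : Ideal R :=
  ⨆ k : ℕ, (F.F (n + ((k + 1) : ℕ) • evec s)).colon ((F.F (evec s) ^ (k + 1) : Ideal R) : Set R)

/-- Vanishing of `H¹_{R₊₊}(R(F))_n` for all `n ∈ ℕˢ`.  By Proposition 4.1 of the paper
(see STATEMENT 9), the degree-`n` component of this local cohomology module is isomorphic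
to `F̆(n)/F(n)`, so its vanishing for all `n ≥ 0` is the statement that the Ratliff–Rush
closure filtration agrees with `F` in all nonnegative degrees. -/
def H1ReesVanishes {R : Type*} [CommRing R] {s : ℕ} {I : Fin s → Ideal R}
    (F : AdmissibleFiltration R s I) : Prop :=
  ∀ n : Fin s → ℤ, 0 ≤ n → ratliffRush F n = F.F n

open Polynomial in
/-- The polynomial `binom(X+k-1,k)` over `ℚ`. -/
noncomputable def qpoly (k : ℕ) : Polynomial ℚ := C ((k.factorial : ℚ)⁻¹) * ascPochhammer ℚ k

lemma qpoly_eval (k : ℕ) (n : ℤ) :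
    (qpoly k).eval (n : ℚ) = ((Ring.choose (n + (k : ℤ) - 1) k : ℤ) : ℚ) := by
  have h := Ring.factorial_nsmul_multichoose_eq_ascPochhammer n k
  have e : n + (k : ℤ) - 1 - k + 1 = n := by ring
  rw [Ring.choose, e, qpoly, Polynomial.eval_mul, Polynomial.eval_C]
  have h2 : ((k.factorial : ℚ)) * ((Ring.multichoose n k : ℤ) : ℚ)
      = (ascPochhammer ℚ k).eval (n : ℚ) := by
    rw [← ascPochhammer_map (Int.castRingHom ℚ), Polynomial.eval_map]
    rw [Polynomial.ascPochhammer_smeval_eq_eval] at h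
    have h3 := congrArg (Int.castRingHom ℚ) h
    rw [← Polynomial.eval₂_at_apply] at h3
    simpa using h3
  rw [← h2]
  have : (k.factorial : ℚ) ≠ 0 := by exact_mod_cast k.factorial_ne_zero
  field_simp

lemma qpoly_eval_zero (k : ℕ) : (qpoly k).eval 0 = if k = 0 then 1 else 0 := by
  rw [qpoly, Polynomial.eval_mul, ascPochhammer_eval_zero]
  split_ifs with h <;> simp [h]

lemma qpoly_natDegree (k : ℕ) : (qpoly k).natDegree = k := by
  have : (k.factorial : ℚ)⁻¹ ≠ 0 := inv_ne_zero (by exact_mod_cast k.factorial_ne_zero)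
  rw [qpoly, Polynomial.natDegree_C_mul this, ascPochhammer_natDegree]

lemma qpoly_leadingCoeff (k : ℕ) : (qpoly k).leadingCoeff = (k.factorial : ℚ)⁻¹ := by
  rw [qpoly, Polynomial.leadingCoeff_mul, Polynomial.leadingCoeff_C,
    (monic_ascPochhammer ℚ k).leadingCoeff, mul_one]

lemma qpoly_ne_zero (k : ℕ) : qpoly k ≠ 0 := by
  rw [← Polynomial.leadingCoeff_ne_zero, qpoly_leadingCoeff]
  exact inv_ne_zero (by exact_mod_cast k.factorial_ne_zero)

lemma qpoly_coeff (k d : ℕ) (h : k ≤ d) :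
    (qpoly k).coeff d = if k = d then (d.factorial : ℚ)⁻¹ else 0 := by
  split_ifs with hk
  · subst hk
    rw [← qpoly_leadingCoeff, Polynomial.leadingCoeff, qpoly_natDegree]
  · apply Polynomial.coeff_eq_zero_of_natDegree_lt
    rw [qpoly_natDegree]; omega

lemma qprod_coeff {s : ℕ} (a : Fin s → ℕ) (d : ℕ) (h : ∑ i, a i ≤ d) :
    (∏ i, qpoly (a i)).coeff d
      = if ∑ i, a i = d then ∏ i, ((a i).factorial : ℚ)⁻¹ else 0 := by
  have hdeg : (∏ i, qpoly (a i)).natDegree = ∑ i, a i := by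
    rw [Polynomial.natDegree_prod _ _ (fun i _ => qpoly_ne_zero _)]
    simp [qpoly_natDegree]
  split_ifs with hk
  · rw [← hk, ← hdeg]
    change Polynomial.leadingCoeff _ = _
    rw [Polynomial.leadingCoeff_prod]
    simp [qpoly_leadingCoeff]
  · apply Polynomial.coeff_eq_zero_of_natDegree_lt
    omega

open Polynomial in
/-- The diagonal multigraded Hilbert polynomial. -/
noncomputable def hpolyQ (s d : ℕ) (c : (Fin s → ℕ) → ℤ) : Polynomial ℚ :=
  ∑ α ∈ Finset.univ.filter (fun α : Fin s → Fin (d+1) => (∑ i, (α i : ℕ)) ≤ d),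
    C ((-1 : ℚ)^(d - ∑ i, (α i : ℕ)) * (c (fun i => (α i : ℕ)) : ℚ)) *
      ∏ i, qpoly (α i : ℕ)

open Polynomial in
/-- The Samuel polynomial. -/
noncomputable def spolyQ (d : ℕ) (b : ℕ → ℤ) : Polynomial ℚ :=
  ∑ i ∈ Finset.range (d + 1), C ((-1 : ℚ)^i * (b i : ℚ)) * qpoly (d - i)

lemma hpolyQ_eval (s d : ℕ) (c : (Fin s → ℕ) → ℤ) (n : ℤ) :
    (hpolyQ s d c).eval (n : ℚ) = ((hilbPoly s d c (fun _ => n) : ℤ) : ℚ) := by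
  simp only [hpolyQ, hilbPoly, Polynomial.eval_finset_sum, Polynomial.eval_mul,
    Polynomial.eval_C, Polynomial.eval_prod, qpoly_eval]
  push_cast
  rfl

lemma spolyQ_eval (d : ℕ) (b : ℕ → ℤ) (n : ℤ) :
    (spolyQ d b).eval (n : ℚ) = ((samuelPoly d b n : ℤ) : ℚ) := by
  simp only [spolyQ, samuelPoly, Polynomial.eval_finset_sum, Polynomial.eval_mul,
    Polynomial.eval_C, qpoly_eval]
  push_cast
  refine Finset.sum_congr rfl fun i hi => ?_
  have hi' : i ≤ d := by simpa [Nat.lt_succ_iff] using hi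
  have : n + ((d - i : ℕ) : ℤ) - 1 = n + (d : ℤ) - 1 - i := by
    push_cast [hi']; ring
  rw [this]

lemma spolyQ_zero (d : ℕ) (b : ℕ → ℤ) : (spolyQ d b).eval 0 = (-1)^d * (b d : ℚ) := by
  simp only [spolyQ, Polynomial.eval_finset_sum, Polynomial.eval_mul,
    Polynomial.eval_C, qpoly_eval_zero]
  rw [Finset.sum_eq_single d]
  · simp
  · intro i hi hne
    have hi' : i ≤ d := by simpa [Nat.lt_succ_iff] using hi
    rw [if_neg (by omega), mul_zero]
  · simp

lemma spolyQ_coeff (d : ℕ) (b : ℕ → ℤ) :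
    (spolyQ d b).coeff d = (b 0 : ℚ) * (d.factorial : ℚ)⁻¹ := by
  simp only [spolyQ, Polynomial.finset_sum_coeff, Polynomial.coeff_C_mul]
  rw [Finset.sum_eq_single 0]
  · simp [qpoly_coeff]
  · intro i hi hne
    have hi' : i ≤ d := by simpa [Nat.lt_succ_iff] using hi
    rw [qpoly_coeff _ _ (Nat.sub_le _ _), if_neg (by omega), mul_zero]
  · simp

lemma hpolyQ_zero (s d : ℕ) (c : (Fin s → ℕ) → ℤ) :
    (hpolyQ s d c).eval 0 = (-1)^d * (c (fun _ => 0) : ℚ) := by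
  simp only [hpolyQ, Polynomial.eval_finset_sum, Polynomial.eval_mul,
    Polynomial.eval_C, Polynomial.eval_prod, qpoly_eval_zero]
  rw [Finset.sum_eq_single (fun _ => 0)]
  · simp
  · intro α hα hne
    obtain ⟨i, hi⟩ := Function.ne_iff.mp hne
    rw [Finset.prod_eq_zero (Finset.mem_univ i), mul_zero]
    rw [if_neg]
    intro h
    exact hi (Fin.ext h)
  · simp

lemma hpolyQ_coeff (s d : ℕ) (c : (Fin s → ℕ) → ℤ) :
    (d.factorial : ℚ) * (hpolyQ s d c).coeff d =
    ((∑ α ∈ Finset.univ.filter (fun α : Fin s → Fin (d+1) => (∑ i, (α i : ℕ)) = d),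
        (Nat.multinomial Finset.univ (fun i => (α i : ℕ)) : ℤ) * c (fun i => (α i : ℕ)) : ℤ) : ℚ) := by
  simp only [hpolyQ, Polynomial.finset_sum_coeff, Polynomial.coeff_C_mul]
  rw [Finset.mul_sum]
  push_cast
  symm
  apply Finset.sum_subset_zero_on_sdiff
  · intro α hα
    simp only [Finset.mem_filter, Finset.mem_univ, true_and] at hα ⊢
    exact hα.le
  · intro α hα
    simp only [Finset.mem_sdiff, Finset.mem_filter, Finset.mem_univ, true_and] at hα
    rw [qprod_coeff _ _ hα.1, if_neg hα.2, mul_zero, mul_zero]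
  · intro α hα
    simp only [Finset.mem_filter, Finset.mem_univ, true_and] at hα
    rw [qprod_coeff _ _ hα.le, if_pos hα, hα]
    have hm := Nat.multinomial_spec Finset.univ (fun i => (α i : ℕ))
    rw [hα] at hm
    have hm' : (∏ i, ((α i : ℕ).factorial : ℚ)) *
        (Nat.multinomial Finset.univ (fun i => (α i : ℕ)) : ℚ) = d.factorial := by
      exact_mod_cast hm
    have hne : (∏ i, ((α i : ℕ).factorial : ℚ)) ≠ 0 :=
      Finset.prod_ne_zero_iff.mpr fun i _ => by exact_mod_cast (α i : ℕ).factorial_ne_zero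
    rw [← hm', Finset.prod_inv_distrib]
    field_simp
    simp

/-- Let `(R,m)` be a Noetherian local ring of dimension `d ≥ 1`, let
`I₁,…,I_s` be `m`-primary ideals and set `I = I₁⋯I_s`.  Then
`Σ_{|α|=d} d!·e_α({Iⁿ})/(α₁!⋯α_s!) = e₀(I)` and `e_{(0,…,0)}({Iⁿ}) = e_d(I)`.
Here `c` is the family of multigraded Hilbert coefficients of the filtration `{Iⁿ}`
and `b` is the family of Hilbert coefficients of `I = I₁⋯I_s`; the multinomial
coefficient `d!/(α₁!⋯α_s!)` is `Nat.multinomial`. -/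
theorem multigraded_coeffs_vs_product_ideal
    (R : Type*) [CommRing R] [IsLocalRing R] [IsNoetherianRing R]
    (d s : ℕ) (hd : 1 ≤ d) (hdim : ringKrullDim R = d)
    (I : Fin s → Ideal R) (hI : ∀ i, IsMPrimary R (I i))
    (c : (Fin s → ℕ) → ℤ)
    (hc : ∃ N : ℕ, ∀ n : Fin s → ℤ, (∀ i, (N : ℤ) ≤ n i) →
      hilbPoly s d c n = lenI R (R ⧸ prodPow I n))
    (b : ℕ → ℤ) (hb : IsSamuelCoeffs (∏ i, I i) d b) :
    (∑ α ∈ Finset.univ.filter (fun α : Fin s → Fin (d+1) => (∑ i, (α i : ℕ)) = d),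
        (Nat.multinomial Finset.univ (fun i => (α i : ℕ)) : ℤ) * c (fun i => (α i : ℕ)))
      = b 0
    ∧ c (fun _ => 0) = b d := by
  obtain ⟨N, hN⟩ := hc
  obtain ⟨M, hM⟩ := hb
  have key : hpolyQ s d c = spolyQ d b := by
    apply Polynomial.eq_of_infinite_eval_eq
    refine Set.Infinite.mono (s := (fun n : ℕ => (n : ℚ)) '' Set.Ici (max N M)) ?_ ?_
    · rintro _ ⟨n, hn, rfl⟩
      have hn' : max N M ≤ n := hn
      have h1 := hN (fun _ => (n : ℤ)) (fun _ => by
        exact_mod_cast (le_max_left N M).trans hn')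
      have h2 := hM n ((le_max_right N M).trans hn')
      have e : prodPow I (fun _ => (n : ℤ)) = (∏ i, I i) ^ n := by
        simp [prodPow, Finset.prod_pow]
      rw [e, ← h2] at h1
      have h3 := hpolyQ_eval s d c n
      have h4 := spolyQ_eval d b n
      rw [h1, ← h4] at h3
      simpa using h3
    · exact (Set.Ici_infinite _).image (Nat.cast_injective.injOn)
  constructor
  · have h := hpolyQ_coeff s d c
    rw [key, spolyQ_coeff] at h
    have : (d.factorial : ℚ) ≠ 0 := by exact_mod_cast d.factorial_ne_zero
    have h5 : (d.factorial : ℚ) * ((b 0 : ℚ) * (d.factorial : ℚ)⁻¹) = b 0 := by field_simp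
    rw [h5] at h
    exact_mod_cast h.symm
  · have h := hpolyQ_zero s d c
    rw [key, spolyQ_zero] at h
    have h6 := mul_left_cancel₀ (pow_ne_zero d (by norm_num : (-1 : ℚ) ≠ 0)) h
    exact_mod_cast h6.symm
end

section
/- Let (R,m) be a Noetherian local ring of dimension d≥1 with depth R ≥ 1, let I_1,…,I_s be m-primary ideals of R, let F = {F(n)}_{n∈ℤ^s} be an I-admissible filtration of ideals in R, and let A = {x_{ij}∈I_i : j=1,…,d; i=1,…,s} be a complete reduction of F. Then for each i = 1,…,s, the ideal J_i = (x_{i1},…,x_{id}) is a reduction of I_i, that is, J_i I_i^n = I_i^{n+1} for some n∈ℕ. -/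
/-! Common definitions for multigraded filtrations of ideals
(following Sarkar–Verma, "Postulation and reduction vectors of
multigraded filtrations of ideals"). -/

open Finset IsLocalRing

theorem aux_elem {R : Type*} [CommRing R] [IsNoetherianRing R] (M a b : Ideal R)
    (hM : ∃ w ∈ M, w ∈ nonZeroDivisors R) (hab : a * M ≤ b * M) (hba : b ≤ a)
    (z : R) (hz : z ∈ a) : ∃ n : ℕ, z ^ (n + 1) ∈ b * a ^ n := by
  obtain ⟨w, hwM, hw⟩ := hM
  have hr : LinearMap.range (algebraMap R (Module.End R M) z) ≤ b • (⊤ : Submodule R M) := by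
    rintro _ ⟨m, rfl⟩
    have h1 : z * (m : R) ∈ b * M := hab (Ideal.mul_mem_mul hz m.2)
    have h2 : (b • (⊤ : Submodule R M)).map M.subtype = b * M := by
      rw [Submodule.map_smul'', Submodule.map_subtype_top]; rfl
    rw [← h2] at h1
    obtain ⟨m', hm', h3⟩ := h1
    have : algebraMap R (Module.End R M) z m = m' := by
      apply Subtype.ext
      simpa using h3.symm
    rw [this]; exact hm'
  obtain ⟨p, hp, -, hc, h0⟩ :=
    LinearMap.exists_monic_and_natDegree_eq_and_coeff_mem_pow_and_aeval_eq_zero R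
      (algebraMap R (Module.End R M) z) b hr
  have hpz : p.eval z = 0 := by
    rw [Polynomial.aeval_algebraMap_apply] at h0
    have h1 := congrArg (fun g : Module.End R M => ((g ⟨w, hwM⟩ : M) : R)) h0
    simp at h1
    exact (mul_right_mem_nonZeroDivisors_eq_zero_iff hw).1 h1
  rw [Polynomial.eval_eq_sum_range, Finset.sum_range_succ, hp.coeff_natDegree, one_mul] at hpz
  rcases hn : p.natDegree with _ | n
  · rw [hn] at hpz
    refine ⟨0, ?_⟩
    have h10 : (1 : R) = 0 := by simpa using hpz
    rw [← mul_one (z ^ _), h10, mul_zero]; exact zero_mem _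
  · refine ⟨n, ?_⟩
    rw [hn] at hpz
    rw [eq_neg_of_add_eq_zero_right hpz]
    refine neg_mem (Ideal.sum_mem _ fun k hk => ?_)
    have hk' : k ≤ n := by simpa [Nat.lt_succ_iff] using hk
    have h1 := hc k
    rw [hn, show n + 1 - k = (n - k) + 1 by omega, pow_succ'] at h1
    have h2 := Ideal.mul_mem_mul h1 (Ideal.pow_mem_pow hz k)
    refine (?_ : b * b ^ (n - k) * a ^ k ≤ _) h2
    rw [mul_assoc]
    refine Ideal.mul_mono_right ?_
    calc b ^ (n - k) * a ^ k ≤ a ^ (n - k) * a ^ k := Ideal.mul_mono_left (Ideal.pow_right_mono hba _)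
      _ = a ^ n := by rw [← pow_add]; congr 1; omega

theorem aux_red {R : Type*} [CommRing R] [IsNoetherianRing R] (M a b : Ideal R)
    (hM : ∃ w ∈ M, w ∈ nonZeroDivisors R) (hab : a * M ≤ b * M) (hba : b ≤ a) :
    ∃ n : ℕ, b * a ^ n = a ^ (n + 1) := by
  have key : ∀ c : Ideal R, c ≤ a → ∃ n : ℕ, c ^ (n + 1) ≤ b * a ^ n := by
    intro c
    refine Submodule.fg_induction (R := R) (M := R)
      (motive := fun c _ => c ≤ a → ∃ n : ℕ, (c : Ideal R) ^ (n + 1) ≤ b * a ^ n)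
      ?_ ?_ c (IsNoetherian.noetherian c)
    · intro z hz
      obtain ⟨n, hn⟩ := aux_elem M a b hM hab hba z (hz (Submodule.mem_span_singleton_self z))
      refine ⟨n, ?_⟩
      change (Ideal.span {z}) ^ (n + 1) ≤ _
      rw [Ideal.span_singleton_pow, Ideal.span_singleton_le_iff_mem]
      exact hn
    · intro c₁ c₂ _ _ h₁ h₂ h
      have l₁ : c₁ ≤ a := le_sup_left.trans h
      have l₂ : c₂ ≤ a := le_sup_right.trans h
      obtain ⟨n₁, h₁⟩ := h₁ l₁
      obtain ⟨n₂, h₂⟩ := h₂ l₂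
      have gen : ∀ (c c' : Ideal R) (n i j : ℕ), c ≤ a → c' ≤ a → c ^ (n + 1) ≤ b * a ^ n →
          n + 1 ≤ i → i + j = n₁ + n₂ + 1 → c ^ i * c' ^ j ≤ b * a ^ (n₁ + n₂) := by
        intro c c' n i j hc hc' hcn hi hij
        calc c ^ i * c' ^ j = c ^ (n + 1) * (c ^ (i - (n + 1)) * c' ^ j) := by
              rw [← mul_assoc, ← pow_add]; congr 2; omega
          _ ≤ (b * a ^ n) * (a ^ (i - (n + 1)) * a ^ j) :=
              Ideal.mul_mono hcn (Ideal.mul_mono (Ideal.pow_right_mono hc _) (Ideal.pow_right_mono hc' _))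
          _ = b * a ^ (n₁ + n₂) := by
              rw [mul_assoc, ← pow_add, ← pow_add]; congr 2; omega
      refine ⟨n₁ + n₂, ?_⟩
      change (c₁ + c₂ : Ideal R) ^ _ ≤ _
      rw [add_pow]
      refine Finset.sum_induction _ (fun t => t ≤ b * a ^ (n₁ + n₂)) ?_ ?_ ?_
      · intro s t hs ht
        exact sup_le hs ht
      · exact bot_le
      · intro k hk
        have hk' : k ≤ n₁ + n₂ + 1 := by simp at hk; omega
        refine Ideal.mul_le_left.trans ?_
        by_cases hh : n₁ + 1 ≤ k
        · exact gen c₁ c₂ n₁ k (n₁ + n₂ + 1 - k) l₁ l₂ h₁ hh (by omega)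
        · rw [mul_comm]
          exact gen c₂ c₁ n₂ (n₁ + n₂ + 1 - k) k l₂ l₁ h₂ (by omega) (by omega)
  obtain ⟨n, hn⟩ := key a le_rfl
  refine ⟨n, le_antisymm ?_ hn⟩
  rw [pow_succ']
  exact Ideal.mul_mono_left hba

/-- Let `(R,m)` be a Noetherian local ring of dimension `d ≥ 1` with
`depth R ≥ 1` (the maximal ideal contains a nonzerodivisor), `I₁,…,I_s` `m`-primary
ideals, `F` an `I`-admissible filtration, and `A = {x_{ij}}` a complete reduction of `F`.
Then for each `i`, the ideal `J_i = (x_{i1},…,x_{id})` is a reduction of `I_i`: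
`J_i I_i^n = I_i^{n+1}` for some `n ∈ ℕ`. -/
theorem complete_reduction_gives_reductions
    (R : Type*) [CommRing R] [IsLocalRing R] [IsNoetherianRing R]
    (d s : ℕ) (hd : 1 ≤ d) (hdim : ringKrullDim R = d)
    (hdepth : ∃ x ∈ maximalIdeal R, x ∈ nonZeroDivisors R)
    (I : Fin s → Ideal R) (hI : ∀ i, IsMPrimary R (I i))
    (F : AdmissibleFiltration R s I)
    (x : Fin s → Fin d → R) (hx : IsCompleteReduction F x) :
    ∀ i : Fin s, ∃ n : ℕ,
      Ideal.span (Set.range fun j => x i j) * (I i) ^ n = (I i) ^ (n + 1) := by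
  intro i
  obtain ⟨hxI, N, hN⟩ := hx
  have hN := hN (fun _ => (N : ℤ)) (fun _ => le_rfl)
  set J : Ideal R := Ideal.span (Set.range fun j => x i j) with hJ
  have hJI : J ≤ I i := by
    rw [hJ, Ideal.span_le]
    rintro _ ⟨j, rfl⟩
    exact hxI i j
  let u : Fin s → ℤ := Pi.single i 1
  let v : Fin s → ℤ := evec s - u
  let m : Fin s → ℤ := v + fun _ => (N : ℤ)
  have hIu : I i ≤ F.F u := by
    refine le_trans (le_of_eq ?_) (F.prodPow_le u)
    unfold prodPow
    rw [Finset.prod_eq_single i]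
    · simp [u]
    · intro k _ hk
      simp [u, hk]
    · simp
  refine aux_red (F.F m) (I i) J ?_ ?_ hJI
  · obtain ⟨w, hwm, hw⟩ := hdepth
    have h1 : ∀ k, ∃ e : ℕ, w ^ e ∈ I k := fun k => (hI k).2 hwm
    choose e he using h1
    refine ⟨∏ k, (w ^ e k) ^ (m k).toNat, F.prodPow_le m ?_, ?_⟩
    · exact Ideal.prod_mem_prod fun k _ => Ideal.pow_mem_pow (he k) _
    · exact prod_mem fun k _ => pow_mem (pow_mem hw _) _
  · calc I i * F.F m ≤ F.F u * F.F m := Ideal.mul_mono_left hIu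
      _ ≤ F.F (u + m) := F.mul_le _ _
      _ = F.F ((fun _ => (N : ℤ)) + evec s) := by
          congr 1; simp only [m, v]; abel
      _ = crIdeal x * F.F (fun _ => (N : ℤ)) := hN.symm
      _ ≤ (J * F.F v) * F.F (fun _ => (N : ℤ)) := by
          refine Ideal.mul_mono_left ?_
          unfold crIdeal
          rw [Ideal.span_le]
          rintro _ ⟨j, rfl⟩
          change ∏ k, x k j ∈ J * F.F v
          rw [← Finset.mul_prod_erase _ _ (Finset.mem_univ i)]
          refine Ideal.mul_mem_mul (Ideal.subset_span ⟨j, rfl⟩) (F.prodPow_le v ?_)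
          unfold prodPow
          rw [← Finset.mul_prod_erase _ _ (Finset.mem_univ i)]
          have h0 : I i ^ (v i).toNat = 1 := by simp [v, u, evec]
          rw [h0, one_mul]
          refine Ideal.prod_mem_prod fun k hk => ?_
          have hk' : k ≠ i := (Finset.mem_erase.1 hk).1
          have h1 : (v k).toNat = 1 := by simp [v, u, evec, hk']
          rw [h1, pow_one]
          exact hxI k j
      _ ≤ J * F.F m := by
          rw [mul_assoc]
          exact Ideal.mul_mono_right (F.mul_le _ _)
end

section
/- Let R = ⊕_{n∈ℕ^s} R_n be an ℕ^s-graded ring, S an ℕ^s-graded R-algebra, and b∈R_e where e = (1,…,1). Suppose that multiplication by b gives an injective map S_n → S_{n+e} for all sufficiently large n∈ℕ^s and that grade(S_{++}) ≥ 1, i.e. (0 :_S (S_{++})^k) = 0 for all k≥1. Then b is a nonzerodivisor on S. -/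
/-- The irrelevant ideal `S₊₊ = ⊕_{n ≥ (1,…,1)} S_n` of an `ℕˢ`-graded ring:
the ideal generated by the homogeneous elements of degree `≥ e = (1,…,1)`. -/
def plusPlusIdeal {s : ℕ} {B : Type*} [CommRing B] (ℬ : (Fin s → ℕ) → AddSubgroup B) :
    Ideal B :=
  Ideal.span {x : B | ∃ n : Fin s → ℕ, (∀ i, 1 ≤ n i) ∧ x ∈ ℬ n}

theorem plusPlusIdeal_pow_le {s : ℕ} {B : Type*} [CommRing B]
    (ℬ : (Fin s → ℕ) → AddSubgroup B) [GradedRing ℬ] (k : ℕ) :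
    (plusPlusIdeal ℬ) ^ k ≤
      Ideal.span {x : B | ∃ n : Fin s → ℕ, (∀ i, k ≤ n i) ∧ x ∈ ℬ n} := by
  induction k with
  | zero =>
    intro y _
    have h1 : (1 : B) ∈ Ideal.span {x : B | ∃ n : Fin s → ℕ, (∀ i, 0 ≤ n i) ∧ x ∈ ℬ n} :=
      Ideal.subset_span ⟨0, fun i => Nat.zero_le _, SetLike.GradedOne.one_mem⟩
    simpa using Ideal.mul_mem_left _ y h1
  | succ k ih =>
    rw [pow_succ]
    refine (Ideal.mul_mono_left ih).trans ?_
    unfold plusPlusIdeal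
    rw [Ideal.span_mul_span', Ideal.span_le]
    rintro _ ⟨u, ⟨n, hn, hu⟩, v, ⟨m, hm, hv⟩, rfl⟩
    exact Ideal.subset_span ⟨n + m, fun i => Nat.add_le_add (hn i) (hm i),
      SetLike.GradedMul.mul_mem hu hv⟩

/-- Let `R = ⊕_{n∈ℕˢ} R_n` be an `ℕˢ`-graded ring, `S` an `ℕˢ`-graded
`R`-algebra (a graded ring together with a degree-preserving ring homomorphism
`φ : R → S`), and `b ∈ R_e` where `e = (1,…,1)`.  Suppose multiplication by `b` gives
an injective map `S_n → S_{n+e}` for all sufficiently large `n ∈ ℕˢ` and that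
`grade(S₊₊) ≥ 1`, i.e. `(0 :_S (S₊₊)^k) = 0` for all `k ≥ 1`.  Then `b` is a
nonzerodivisor on `S`. -/
theorem nonzerodivisor_of_eventually_injective
    (s : ℕ) (A B : Type*) [CommRing A] [CommRing B]
    (𝒜 : (Fin s → ℕ) → AddSubgroup A) (ℬ : (Fin s → ℕ) → AddSubgroup B)
    [GradedRing 𝒜] [GradedRing ℬ]
    (φ : A →+* B) (hφ : ∀ n : Fin s → ℕ, ∀ a ∈ 𝒜 n, φ a ∈ ℬ n)
    (b : A) (hb : b ∈ 𝒜 (fun _ => 1))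
    (hinj : ∃ N : ℕ, ∀ n : Fin s → ℕ, (∀ i, N ≤ n i) →
      ∀ x ∈ ℬ n, φ b * x = 0 → x = 0)
    (hgrade : ∀ k : ℕ, 1 ≤ k → ∀ x : B,
      (∀ y ∈ (plusPlusIdeal ℬ) ^ k, x * y = 0) → x = 0) :
    ∀ x : B, φ b * x = 0 → x = 0 := by
  obtain ⟨N, hN⟩ := hinj
  have key : ∀ m : Fin s → ℕ, ∀ x ∈ ℬ m, φ b * x = 0 → x = 0 := by
    intro m x hx hbx
    refine hgrade (N + 1) (by omega) x fun y hy => ?_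
    replace hy := plusPlusIdeal_pow_le ℬ (N + 1) hy
    induction hy using Submodule.span_induction with
    | mem y h =>
      obtain ⟨n, hn, hyn⟩ := h
      refine hN (m + n) (fun i => ?_) _ (SetLike.GradedMul.mul_mem hx hyn) ?_
      · have := hn i
        simp only [Pi.add_apply]
        omega
      · rw [← mul_assoc, hbx, zero_mul]
    | zero => simp
    | add u v _ _ hu hv => rw [mul_add, hu, hv, add_zero]
    | smul a u _ hu => rw [smul_eq_mul, mul_left_comm, hu, mul_zero]
  intro x hx
  classical
  rw [← DirectSum.sum_support_decompose ℬ x]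
  refine Finset.sum_eq_zero fun m _ => key m _ (SetLike.coe_mem _) ?_
  rw [← DirectSum.coe_decompose_mul_add_of_left_mem ℬ (hφ _ b hb), hx]
  simp
end

section
/- Let (R,m) be a Cohen–Macaulay local ring of dimension d with 1≤d≤2 and infinite residue field, I_1,…,I_s m-primary ideals, and F = {F(n)}_{n∈ℤ^s} an I-admissible filtration of ideals in R. Suppose e_{(d−1)e_i}(F) = 0 for i = 1,…,s. Then: (1) if d = 1, then P_F(n) = H_F(n) for all n∈ℕ^s; (2) if d = 2 and H^1_{R_{++}}(R(F))_n = 0 for all n∈ℕ^s, then P_F(n) = H_F(n) for all n∈ℕ^s and e_{(0,…,0)}(F) = 0. -/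
/-! Common definitions for multigraded filtrations of ideals
(following Sarkar–Verma, "Postulation and reduction vectors of
multigraded filtrations of ideals"). -/

open Finset IsLocalRing

section MultiRees

variable {R : Type*} [CommRing R] {s : ℕ}

theorem avoid_submodules [IsLocalRing R] [Infinite (IsLocalRing.ResidueField R)]
    {M : Type*} [AddCommGroup M] [Module R M] [Module.Finite R M]
    (t : Finset (Submodule R M)) (ht : ∀ p ∈ t, p ≠ ⊤) : ∃ x : M, ∀ p ∈ t, x ∉ p := by
  classical
  by_contra hcon
  push Not at hcon
  have hcov : ⋃ p ∈ t, ((p ⊔ maximalIdeal R • (⊤ : Submodule R M) : Submodule R M) : Set M)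
      = Set.univ := by
    rw [Set.eq_univ_iff_forall]
    intro x
    obtain ⟨p, hp, hx⟩ := hcon x
    simp only [Set.mem_iUnion]
    exact ⟨p, hp, Submodule.mem_sup_left hx⟩
  obtain ⟨p, hp, hfi⟩ := Submodule.exists_finiteIndex_of_cover hcov
  set q := p ⊔ maximalIdeal R • (⊤ : Submodule R M) with hq
  have hfin : Finite (M ⧸ q) := AddSubgroup.finite_quotient_of_finiteIndex
  have hqt : q ≠ ⊤ := by
    intro h
    apply ht p hp
    rw [eq_top_iff]
    refine Submodule.le_of_le_smul_of_le_jacobson_bot (I := maximalIdeal R)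
      Module.Finite.fg_top (IsLocalRing.maximalIdeal_le_jacobson _) ?_
    rw [← hq, h]
  obtain ⟨v, hv⟩ : ∃ v, v ∉ q := by
    by_contra h
    push Not at h
    exact hqt (eq_top_iff.2 fun x _ => h x)
  let f : R →ₗ[R] M ⧸ q := (LinearMap.toSpanSingleton R (M ⧸ q) (q.mkQ v))
  have hm : ∀ r ∈ maximalIdeal R, f r = 0 := by
    intro r hr
    simp only [f, LinearMap.toSpanSingleton_apply, ← map_smul]
    rw [Submodule.mkQ_apply, Submodule.Quotient.mk_eq_zero]
    exact Submodule.mem_sup_right (Submodule.smul_mem_smul hr trivial)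
  have hker : ∀ r, f r = 0 → r ∈ maximalIdeal R := by
    intro r hr
    rw [IsLocalRing.mem_maximalIdeal, mem_nonunits_iff]
    intro hu
    simp only [f, LinearMap.toSpanSingleton_apply, ← map_smul] at hr
    rw [Submodule.mkQ_apply, Submodule.Quotient.mk_eq_zero] at hr
    exact hv ((Submodule.smul_mem_iff_of_isUnit q hu).1 hr)
  have hinj : ∃ g : (R ⧸ maximalIdeal R) → M ⧸ q, Function.Injective g := by
    refine ⟨(maximalIdeal R).liftQ f (fun r hr => hm r hr), ?_⟩
    rw [← LinearMap.ker_eq_bot]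
    exact Submodule.ker_liftQ_eq_bot _ _ _ (fun r hr => hker r hr)
  obtain ⟨g, hg⟩ := hinj
  have : Infinite (R ⧸ maximalIdeal R) := inferInstanceAs (Infinite (IsLocalRing.ResidueField R))
  exact not_finite_iff_infinite.2 this (Finite.of_injective g hg)

/-- products of powers, natural exponents -/
def ipw (I : Fin s → Ideal R) (a : Fin s →₀ ℕ) : Ideal R := ∏ i, I i ^ a i

theorem ipw_add (I : Fin s → Ideal R) (a b : Fin s →₀ ℕ) :
    ipw I (a + b) = ipw I a * ipw I b := by
  simp [ipw, pow_add, Finset.prod_mul_distrib]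

theorem ipw_zero (I : Fin s → Ideal R) : ipw I 0 = ⊤ := by
  simp [ipw]

theorem ipw_single (I : Fin s → Ideal R) (i : Fin s) (r : ℕ) :
    ipw I (Finsupp.single i r) = I i ^ r := by
  classical
  unfold ipw
  rw [Finset.prod_eq_single i]
  · simp
  · intro j _ hj
    simp [hj.symm]
  · simp

theorem ipw_anti (I : Fin s → Ideal R) {a b : Fin s →₀ ℕ} (h : a ≤ b) : ipw I b ≤ ipw I a := by
  obtain ⟨c, rfl⟩ := exists_add_of_le h
  rw [ipw_add]
  exact Ideal.mul_le_left (I := ipw I a) (J := ipw I c)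

/-- multi Rees algebra -/
def mRees (I : Fin s → Ideal R) : Subalgebra R (MvPolynomial (Fin s) R) where
  carrier := { f | ∀ a, f.coeff a ∈ ipw I a }
  mul_mem' hf hg i := by
    classical
    rw [MvPolynomial.coeff_mul]
    apply Ideal.sum_mem
    rintro ⟨j, k⟩ e
    rw [← Finset.HasAntidiagonal.mem_antidiagonal.mp e, ipw_add]
    exact Ideal.mul_mem_mul (hf j) (hg k)
  add_mem' hf hg i := by
    rw [MvPolynomial.coeff_add]
    exact Ideal.add_mem _ (hf i) (hg i)
  algebraMap_mem' r i := by
    classical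
    rw [MvPolynomial.algebraMap_eq, MvPolynomial.coeff_C]
    split_ifs with h
    · subst h
      simp [ipw_zero]
    · simp

theorem monomial_mem_mRees (I : Fin s → Ideal R) {a : Fin s →₀ ℕ} {z : R} (hz : z ∈ ipw I a) :
    MvPolynomial.monomial a z ∈ mRees I := by
  classical
  intro b
  rw [MvPolynomial.coeff_monomial]
  split_ifs with h
  · exact h ▸ hz
  · simp

theorem mRees_sub (I : Fin s → Ideal R) (A : Subalgebra R (MvPolynomial (Fin s) R))
    (hA : ∀ i, ∀ y ∈ I i, MvPolynomial.monomial (Finsupp.single i 1) y ∈ A) : mRees I ≤ A := by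
  classical
  have key1 : ∀ i (r : ℕ), ∀ y ∈ I i ^ r, MvPolynomial.monomial (Finsupp.single i r) y ∈ A := by
    intro i r
    induction r with
    | zero =>
      intro y _
      rw [Finsupp.single_zero]
      exact A.algebraMap_mem y
    | succ n ih =>
      intro y hy
      rw [pow_succ] at hy
      refine Submodule.mul_induction_on hy ?_ ?_
      · intro u hu v hv
        rw [Finsupp.single_add, ← MvPolynomial.monomial_mul]
        exact A.mul_mem (ih u hu) (hA i v hv)
      · intro u v hu hv
        rw [map_add]
        exact A.add_mem hu hv
  have key2 : ∀ (t : Finset (Fin s)) (a : Fin s →₀ ℕ), ∀ y ∈ ∏ i ∈ t, I i ^ a i,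
      MvPolynomial.monomial (∑ i ∈ t, Finsupp.single i (a i)) y ∈ A := by
    intro t a
    induction t using Finset.induction_on with
    | empty =>
      intro y _
      rw [Finset.sum_empty]
      exact A.algebraMap_mem y
    | insert i t hi ih =>
      intro y hy
      rw [Finset.prod_insert hi] at hy
      rw [Finset.sum_insert hi]
      refine Submodule.mul_induction_on hy ?_ ?_
      · intro u hu v hv
        rw [← MvPolynomial.monomial_mul]
        exact A.mul_mem (key1 i _ u hu) (ih v hv)
      · intro u v hu hv
        rw [map_add]
        exact A.add_mem hu hv
  intro f hf
  rw [MvPolynomial.as_sum f]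
  refine A.sum_mem fun a _ => ?_
  have := key2 Finset.univ a _ (hf a)
  rwa [Finsupp.univ_sum_single] at this

theorem mRees_fg [IsNoetherianRing R] (I : Fin s → Ideal R) : (mRees I).FG := by
  classical
  choose g hg using fun i => (isNoetherianRing_iff_ideal_fg R).1 inferInstance (I i)
  refine ⟨Finset.univ.biUnion fun i =>
    (g i).image (MvPolynomial.monomial (Finsupp.single i 1)), ?_⟩
  apply le_antisymm
  · apply Algebra.adjoin_le
    intro f hf
    simp only [Finset.coe_biUnion, Set.mem_iUnion, Finset.coe_image, Set.mem_image] at hf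
    obtain ⟨i, -, y, hy, rfl⟩ := hf
    refine monomial_mem_mRees I ?_
    rw [ipw_single, pow_one, ← hg i]
    exact Ideal.subset_span hy
  · apply mRees_sub
    intro i y hy
    rw [← hg i] at hy
    refine Submodule.span_induction (p := fun y _ => MvPolynomial.monomial (Finsupp.single i 1) y ∈ _)
      ?_ ?_ ?_ ?_ hy
    · intro y hy
      apply Algebra.subset_adjoin
      simp only [Finset.coe_biUnion, Set.mem_iUnion, Finset.coe_image, Set.mem_image]
      exact ⟨i, by simp, y, hy, rfl⟩
    · simp
    · intro x y _ _ hx hy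
      rw [map_add]
      exact Subalgebra.add_mem _ hx hy
    · intro a x _ hx
      rw [map_smul]
      exact Subalgebra.smul_mem _ hx a

theorem mRees_noeth [IsNoetherianRing R] (I : Fin s → Ideal R) : IsNoetherianRing (mRees I) := by
  have : Algebra.FiniteType R (mRees I) := ⟨(mRees I).fg_top.mpr (mRees_fg I)⟩
  exact Algebra.FiniteType.isNoetherianRing R _

/-- homogeneous ideal from components -/
def idl (I : Fin s → Ideal R) (L : (Fin s →₀ ℕ) → Ideal R)
    (hL : ∀ a b, ipw I a * L b ≤ L (a + b)) : Ideal (mRees I) where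
  carrier := { f | ∀ a, f.1.coeff a ∈ L a }
  add_mem' hf hg i := by
    simp only [AddMemClass.coe_add, MvPolynomial.coeff_add]
    exact Ideal.add_mem _ (hf i) (hg i)
  zero_mem' i := by simp
  smul_mem' c f hf i := by
    classical
    simp only [smul_eq_mul, MulMemClass.coe_mul]
    rw [MvPolynomial.coeff_mul]
    apply Ideal.sum_mem
    rintro ⟨j, k⟩ e
    rw [← Finset.HasAntidiagonal.mem_antidiagonal.mp e]
    exact hL _ _ (Ideal.mul_mem_mul (c.2 j) (hf k))

theorem mem_idl {I : Fin s → Ideal R} {L : (Fin s →₀ ℕ) → Ideal R}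
    {hL : ∀ a b, ipw I a * L b ≤ L (a + b)} {f : mRees I} :
    f ∈ idl I L hL ↔ ∀ a, f.1.coeff a ∈ L a := Iff.rfl

theorem mono_mem_idl {I : Fin s → Ideal R} {L : (Fin s →₀ ℕ) → Ideal R}
    {hL : ∀ a b, ipw I a * L b ≤ L (a + b)} {f : mRees I} {a : Fin s →₀ ℕ} {z : R}
    (hf : f.1 = MvPolynomial.monomial a z) :
    f ∈ idl I L hL ↔ z ∈ L a := by
  classical
  rw [mem_idl, hf]
  constructor
  · intro h
    simpa using h a
  · intro h b
    rw [MvPolynomial.coeff_monomial]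
    split_ifs with e
    · exact e ▸ h
    · simp

/-- eventual stability -/
theorem gen_lemma [IsNoetherianRing R] (I : Fin s → Ideal R) (L : (Fin s →₀ ℕ) → Ideal R)
    (hL : ∀ a b, ipw I a * L b ≤ L (a + b)) (hLI : ∀ a, L a ≤ ipw I a) :
    ∃ k : Fin s →₀ ℕ, ∀ a, L (a + k) ≤ ipw I a * L k := by
  classical
  have := mRees_noeth I
  obtain ⟨g, hg⟩ := (isNoetherianRing_iff_ideal_fg (mRees I)).1 inferInstance (idl I L hL)
  refine ⟨g.sup fun f => f.1.support.sup id, fun a z hz => ?_⟩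
  set k := g.sup fun f => f.1.support.sup id with hk
  have hgL : ∀ f ∈ g, f ∈ idl I L hL := fun f hf => hg ▸ Ideal.subset_span hf
  have hz1 : (⟨MvPolynomial.monomial (a + k) z, monomial_mem_mRees I (hLI _ hz)⟩ : mRees I)
      ∈ idl I L hL := (mono_mem_idl rfl).2 hz
  have main : ∀ f ∈ Ideal.span (g : Set (mRees I)), f.1.coeff (a + k) ∈ ipw I a * L k := by
    intro f hf
    obtain ⟨φ, -, rfl⟩ := Submodule.mem_span_finset.1 hf
    have e1 : (∑ h ∈ g, φ h • h : mRees I).1 = ∑ h ∈ g, (φ h).1 * h.1 := by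
      simp
    rw [e1, MvPolynomial.coeff_sum]
    refine Ideal.sum_mem _ fun h hh => ?_
    rw [MvPolynomial.coeff_mul]
    refine Ideal.sum_mem _ ?_
    rintro ⟨u, v⟩ e
    have e := Finset.HasAntidiagonal.mem_antidiagonal.mp e
    simp only at e ⊢
    by_cases hv : v ∈ h.1.support
    · have hvk : v ≤ k := (Finset.le_sup (f := id) hv).trans
        (Finset.le_sup (f := fun f : mRees I => f.1.support.sup id) hh)
      obtain ⟨w, hw⟩ := exists_add_of_le hvk
      have hu : u = a + w := by
        rw [hw, add_comm v w, ← add_assoc] at e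
        exact add_right_cancel e
      have h1 := (φ h).2 u
      rw [hu, ipw_add] at h1
      have h2 := Ideal.mul_mem_mul h1 (hgL h hh v)
      rw [mul_assoc] at h2
      rw [hu]
      refine Ideal.mul_mono_right (I := ipw I a) ?_ h2
      rw [hw, add_comm v w]
      exact hL w v
    · rw [MvPolynomial.notMem_support_iff.1 hv, mul_zero]
      exact Ideal.zero_mem _
  have := main _ (hg ▸ hz1)
  simpa using this


/-- constant exponent -/
noncomputable def cst (s N : ℕ) : Fin s →₀ ℕ := Finsupp.equivFunOnFinite.symm fun _ => N

@[simp] theorem cst_apply (N : ℕ) (i : Fin s) : cst s N i = N := rfl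

theorem cst_add (M N : ℕ) : cst s (M + N) = cst s M + cst s N := by
  ext i; simp

theorem exists_cst_ge (k : Fin s →₀ ℕ) : ∃ N, k ≤ cst s N := by
  refine ⟨∑ i, k i, fun i => ?_⟩
  rw [cst_apply]
  exact Finset.single_le_sum (f := fun i => k i) (fun _ _ => Nat.zero_le _) (Finset.mem_univ i)

theorem superficial_step1 [IsLocalRing R] [IsNoetherianRing R]
    [Infinite (IsLocalRing.ResidueField R)]
    (hD : ∀ w : R, (∀ a ∈ maximalIdeal R, a * w = 0) → w = 0)
    (I : Fin s → Ideal R) (i : Fin s) (hI : maximalIdeal R ≤ (I i).radical)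
    (Q : Ideal (mRees I)) :
    ∃ x ∈ I i, x ∈ nonZeroDivisors R ∧ ∃ X : mRees I,
      X.1 = MvPolynomial.monomial (Finsupp.single i 1) x ∧
      ∃ r : ℕ, ∀ g : mRees I, X * g ∈ Q → ∀ Y : mRees I, ∀ y ∈ I i ^ r,
        Y.1 = MvPolynomial.monomial (Finsupp.single i r) y → Y * g ∈ Q := by
  classical
  have hN := mRees_noeth I
  obtain ⟨t, ht, htp⟩ := Submodule.isLasker (mRees I) (mRees I) Q
  let φ : I i →ₗ[R] mRees I :=
    { toFun := fun y => ⟨MvPolynomial.monomial (Finsupp.single i 1) y.1,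
        monomial_mem_mRees I (by rw [ipw_single, pow_one]; exact y.2)⟩
      map_add' := fun a b => by ext1; simp
      map_smul' := fun a b => by ext1; simp [MvPolynomial.smul_monomial] }
  let V : Ideal (mRees I) → Submodule R (I i) := fun J => (J.radical.restrictScalars R).comap φ
  let W : Ideal R → Submodule R (I i) := fun p => Submodule.comap (I i).subtype p
  have hfin := associatedPrimes.finite R R
  obtain ⟨x, hx⟩ := avoid_submodules
    ((t.image V ∪ hfin.toFinset.image W).filter (fun p => p ≠ ⊤))
    (fun p hp => (Finset.mem_filter.1 hp).2)
  have hxV : ∀ J ∈ t, V J ≠ ⊤ → φ x ∉ Ideal.radical J := by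
    intro J hJ hne
    exact hx (V J) (Finset.mem_filter.2
      ⟨Finset.mem_union_left _ (Finset.mem_image_of_mem _ hJ), hne⟩)
  have hxW : ∀ p ∈ associatedPrimes R R, x.1 ∉ p := by
    intro p hp
    have hne : W p ≠ ⊤ := by
      intro h
      have hle : I i ≤ p := by
        intro y hy
        have : (⟨y, hy⟩ : I i) ∈ W p := h ▸ trivial
        exact this
      have hpp : p.IsPrime := hp.1
      have hm : maximalIdeal R ≤ p := hI.trans (hpp.radical_le_iff.2 hle)
      obtain ⟨_, w, hw⟩ := isAssociatedPrime_iff.1 (AssociatedPrimes.mem_iff.1 hp)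
      have hw0 : w = 0 := hD w fun a ha => by
        have h1 : a ∈ p := hm ha
        rw [hw, Submodule.mem_colon_singleton] at h1
        simpa using h1
      apply hpp.ne_top
      rw [hw, hw0, eq_top_iff]
      intro a _
      rw [Submodule.mem_colon_singleton]
      simp
    exact hx (W p) (Finset.mem_filter.2
      ⟨Finset.mem_union_right _ (Finset.mem_image_of_mem _ (hfin.mem_toFinset.2 hp)), hne⟩)
  have hxn : x.1 ∈ nonZeroDivisors R := by
    have := biUnion_associatedPrimes_eq_compl_nonZeroDivisors R
    by_contra hcon
    have h2 : x.1 ∈ ((nonZeroDivisors R : Set R))ᶜ := hcon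
    rw [← this] at h2
    simp only [Set.mem_iUnion] at h2
    obtain ⟨p, hp, hxp⟩ := h2
    exact hxW p hp hxp
  let J0 : Ideal (mRees I) := Ideal.span (Set.range φ)
  have hpow : ∀ J ∈ t, V J = ⊤ → ∃ r : ℕ, J0 ^ r ≤ J := by
    intro J hJ h
    refine Ideal.exists_pow_le_of_le_radical_of_fg ?_
      ((isNoetherianRing_iff_ideal_fg _).1 hN J0)
    rw [Ideal.span_le]
    rintro _ ⟨y, rfl⟩
    have : y ∈ V J := h ▸ trivial
    exact this
  have hpow2 : ∀ J : Ideal (mRees I), ∃ r : ℕ, J ∈ t → V J = ⊤ → J0 ^ r ≤ J := by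
    intro J
    by_cases h : J ∈ t ∧ V J = ⊤
    · obtain ⟨r, hr⟩ := hpow J h.1 h.2
      exact ⟨r, fun _ _ => hr⟩
    · exact ⟨0, fun h1 h2 => absurd ⟨h1, h2⟩ h⟩
  choose r hr using hpow2
  have hYJ : ∀ r : ℕ, ∀ y ∈ I i ^ r, ∀ Y : mRees I,
      Y.1 = MvPolynomial.monomial (Finsupp.single i r) y → Y ∈ J0 ^ r := by
    intro r
    induction r with
    | zero => intro y _ Y _; simp
    | succ n ih =>
      intro y hy
      have hex : ∃ Y ∈ J0 ^ (n + 1),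
          (Y : mRees I).1 = MvPolynomial.monomial (Finsupp.single i (n + 1)) y := by
        rw [pow_succ] at hy
        refine Submodule.mul_induction_on hy ?_ ?_
        · intro u hu v hv
          refine ⟨(⟨MvPolynomial.monomial (Finsupp.single i n) u,
            monomial_mem_mRees I (by rw [ipw_single]; exact hu)⟩ : mRees I) * φ ⟨v, hv⟩, ?_, ?_⟩
          · rw [pow_succ]
            exact Ideal.mul_mem_mul (ih u hu _ rfl) (Ideal.subset_span ⟨_, rfl⟩)
          · rw [Finsupp.single_add, ← MvPolynomial.monomial_mul]
            rfl
        · rintro u v ⟨A, hA, hA'⟩ ⟨B, hB, hB'⟩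
          exact ⟨A + B, Ideal.add_mem _ hA hB, by rw [map_add, ← hA', ← hB']; rfl⟩
      intro Y hY
      obtain ⟨Z, hZ, hZ'⟩ := hex
      have : Y = Z := Subtype.ext (hY.trans hZ'.symm)
      exact this ▸ hZ
  refine ⟨x.1, x.2, hxn, φ x, rfl, t.sup r, ?_⟩
  intro g hg Y y hy hY
  rw [← ht] at hg ⊢
  rw [Submodule.mem_finsetInf] at hg ⊢
  intro J hJ
  by_cases hVJ : V J = ⊤
  · apply Ideal.mul_mem_right
    exact hr J hJ hVJ (Ideal.pow_le_pow_right (Finset.le_sup hJ) (hYJ _ y hy Y hY))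
  · have hprim : Ideal.IsPrimary J := htp hJ
    have h1 := hg J hJ
    rw [id, mul_comm] at h1
    rcases (Ideal.isPrimary_iff.1 hprim).2 h1 with h2 | h2
    · exact Ideal.mul_mem_left _ _ h2
    · exact absurd h2 (hxV J hJ hVJ)

theorem superficial_nat [IsLocalRing R] [IsNoetherianRing R]
    [Infinite (IsLocalRing.ResidueField R)]
    (hD : ∀ w : R, (∀ a ∈ maximalIdeal R, a * w = 0) → w = 0)
    (I : Fin s → Ideal R) (i : Fin s) (hI : maximalIdeal R ≤ (I i).radical)
    (G : Ideal R) :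
    ∃ x ∈ I i, x ∈ nonZeroDivisors R ∧ ∃ N : ℕ, ∀ a : Fin s →₀ ℕ, cst s N ≤ a → ∀ z : R,
      x * z ∈ ipw I (a + Finsupp.single i 1) * G → z ∈ ipw I a * G := by
  classical
  let Φ : (Fin s →₀ ℕ) → Ideal R := fun a => ipw I a * G
  have hΦ : ∀ a b, ipw I a * Φ b = Φ (a + b) := by
    intro a b
    simp only [Φ, ipw_add, mul_assoc]
  have hΦI : ∀ a, Φ a ≤ ipw I a := fun a => Ideal.mul_le_left
  have hΦanti : ∀ {a b}, a ≤ b → Φ b ≤ Φ a := fun h => Ideal.mul_mono_left (ipw_anti I h)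
  let M1 := idl I (fun a => Φ (a + cst s 1)) (fun a b => by rw [hΦ, add_assoc])
  obtain ⟨x, hx, hxn, X, hX, r, hr⟩ := superficial_step1 hD I i hI M1
  refine ⟨x, hx, hxn, ?_⟩
  let ei : Fin s →₀ ℕ := Finsupp.single i 1
  -- first family
  let L : (Fin s →₀ ℕ) → Ideal R := fun a =>
    ipw I a ⊓ Submodule.comap (LinearMap.mulLeft R x) (Φ (a + cst s 1 + ei))
  have memL : ∀ a z, z ∈ L a ↔ z ∈ ipw I a ∧ x * z ∈ Φ (a + cst s 1 + ei) := fun a z => Iff.rfl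
  have hL : ∀ a b, ipw I a * L b ≤ L (a + b) := by
    intro a b
    rw [Ideal.mul_le]
    intro u hu v hv
    rw [memL] at hv ⊢
    constructor
    · rw [ipw_add]; exact Ideal.mul_mem_mul hu hv.1
    · have := Ideal.mul_mem_mul hu hv.2
      rw [hΦ] at this
      have e1 : x * (u * v) = u * (x * v) := by ring
      have e2 : a + b + cst s 1 + ei = a + (b + cst s 1 + ei) := by abel
      rw [e1, e2]
      exact this
  obtain ⟨k, hk⟩ := gen_lemma I L hL (fun a => inf_le_left)
  have hstep : ∀ y ∈ I i ^ r, ∀ z ∈ L k, y * z ∈ Φ (k + cst s 1 + Finsupp.single i r) := by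
    intro y hy z hz
    rw [memL] at hz
    let g : mRees I := ⟨MvPolynomial.monomial k z, monomial_mem_mRees I hz.1⟩
    let Y : mRees I := ⟨MvPolynomial.monomial (Finsupp.single i r) y,
      monomial_mem_mRees I (by rw [ipw_single]; exact hy)⟩
    have hXg : X * g ∈ M1 := by
      refine (mono_mem_idl (a := ei + k) (z := x * z) ?_).2 ?_
      · rw [MulMemClass.coe_mul, hX, MvPolynomial.monomial_mul]
      · convert hz.2 using 2; abel
    have h2 := hr g hXg Y y hy rfl
    have h3 := (mono_mem_idl (a := Finsupp.single i r + k) (z := y * z) (by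
      rw [MulMemClass.coe_mul, MvPolynomial.monomial_mul])).1 h2
    convert h3 using 2; abel
  have hC : ∀ a, k + cst s r ≤ a → ∀ z ∈ ipw I a, x * z ∈ Φ (a + cst s 1 + ei) →
      z ∈ Φ (a + cst s 1) := by
    intro a ha z hz hxz
    obtain ⟨b, rfl⟩ := exists_add_of_le ha
    obtain ⟨c, hc⟩ := exists_add_of_le (show Finsupp.single i r ≤ cst s r from by
      intro j
      by_cases h : j = i
      · subst h; simp
      · simp [h])
    have hz' : z ∈ L (b + cst s r + k) := by
      rw [memL]
      constructor
      · convert hz using 2; abel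
      · convert hxz using 2; abel
    have h4 := hk _ hz'
    have h5 : ipw I (b + cst s r) * L k ≤ Φ (k + cst s r + b + cst s 1) := by
      have : ipw I (b + cst s r) = ipw I (b + c) * I i ^ r := by
        rw [← ipw_single, ← ipw_add, hc]; congr 1; abel
      rw [this, mul_assoc]
      have h6 : I i ^ r * L k ≤ Φ (k + cst s 1 + Finsupp.single i r) := by
        rw [Ideal.mul_le]; exact hstep
      refine (Ideal.mul_mono_right h6).trans ?_
      rw [hΦ, hc]
      apply le_of_eq
      congr 1; abel
    exact h5 h4
  -- Artin Rees
  let L2 : (Fin s →₀ ℕ) → Ideal R := fun a => Φ a ⊓ Ideal.span {x}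
  have hL2 : ∀ a b, ipw I a * L2 b ≤ L2 (a + b) := by
    intro a b
    refine le_inf ?_ ?_
    · rw [← hΦ]; exact Ideal.mul_mono_right inf_le_left
    · exact Ideal.mul_le_right.trans inf_le_right
  obtain ⟨k2, hk2⟩ := gen_lemma I L2 hL2 (fun a => inf_le_left.trans (hΦI a))
  have hAR : ∀ a z, x * z ∈ Φ (a + k2) → z ∈ ipw I a := by
    intro a z hz
    have h1 : x * z ∈ L2 (a + k2) := ⟨hz, Ideal.mem_span_singleton'.2 ⟨z, by ring⟩⟩
    have h2 := Ideal.mul_mono_right inf_le_right (hk2 _ h1)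
    obtain ⟨w, hw, hwz⟩ := Ideal.mem_mul_span_singleton.1 h2
    have : w = z := by
      have : x * w = x * z := by rw [← hwz]; ring
      exact (mul_cancel_left_mem_nonZeroDivisors hxn).1 this
    exact this ▸ hw
  obtain ⟨K1, hK1⟩ := exists_cst_ge (k + cst s r)
  obtain ⟨K2, hK2⟩ := exists_cst_ge k2
  refine ⟨K1 + (K2 + 1), ?_⟩
  intro a ha z hz
  obtain ⟨b, rfl⟩ := exists_add_of_le ha
  rw [cst_add] at hz ⊢
  have hind : ∀ j, j ≤ K2 + 1 → z ∈ ipw I (b + cst s K1 + cst s j) ∧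
      (0 < j → z ∈ Φ (b + cst s K1 + cst s j)) := by
    intro j
    induction j with
    | zero =>
      intro _
      refine ⟨?_, by simp⟩
      have : z ∈ ipw I (b + cst s K1) := by
        apply hAR
        refine hΦanti ?_ hz
        intro j
        have := hK2 j
        simp only [Finsupp.add_apply, cst_apply] at this ⊢
        omega
      convert this using 2
      ext j; simp
    | succ j ih =>
      intro hj
      have h1 := (ih (by omega)).1
      have h2 : z ∈ Φ (b + cst s K1 + cst s (j + 1)) := by
        have := hC (b + cst s K1 + cst s j) ?_ z h1 ?_
        · rw [cst_add, ← add_assoc]; exact this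
        · refine hK1.trans ?_
          intro l; simp; omega
        · refine hΦanti ?_ hz
          intro l
          simp only [Finsupp.add_apply, cst_apply, ei]
          omega
      exact ⟨hΦI _ h2, fun _ => h2⟩
  have := (hind (K2 + 1) le_rfl).2 (by omega)
  convert this using 2
  congr 1; abel

end MultiRees

section Lengths

variable {R : Type*} [CommRing R]

theorem lenI_eq (M : Type*) [AddCommGroup M] [Module R M] :
    lenI R M = ((Module.length R M).toNat : ℤ) := by
  unfold lenI
  rw [← Module.coe_length]
  rfl

/-- colength is finite -/
def FinCol (J : Ideal R) : Prop := Module.length R (R ⧸ J) ≠ ⊤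

/-- colength -/
noncomputable def col (J : Ideal R) : ℤ := lenI R (R ⧸ J)

theorem FinCol.of_artinian {J : Ideal R} [IsArtinianRing (R ⧸ J)] : FinCol J := by
  unfold FinCol
  rw [Module.length_eq_of_surjective (S := R) (R := R ⧸ J) Ideal.Quotient.mk_surjective]
  exact Module.length_ne_top

theorem artinian_of_radical [IsLocalRing R] [IsNoetherianRing R] {J : Ideal R}
    (h : maximalIdeal R ≤ J.radical) : IsArtinianRing (R ⧸ J) := by
  have : Ring.KrullDimLE 0 (R ⧸ J) := Ring.krullDimLE_zero_iff.mpr fun P hP => by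
    have hp : (P.comap (Ideal.Quotient.mk J)).IsPrime := inferInstance
    have hJ : J ≤ P.comap (Ideal.Quotient.mk J) := by
      intro y hy
      rw [Ideal.mem_comap, Ideal.Quotient.eq_zero_iff_mem.2 hy]
      exact P.zero_mem
    have hm : maximalIdeal R ≤ P.comap (Ideal.Quotient.mk J) :=
      h.trans (hp.radical_le_iff.2 hJ)
    have he := (IsLocalRing.maximalIdeal.isMaximal R).eq_of_le hp.ne_top hm
    have hmax : (P.comap (Ideal.Quotient.mk J)).IsMaximal := he ▸ IsLocalRing.maximalIdeal.isMaximal R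
    exact Ideal.isMaximal_of_isIntegral_of_isMaximal_comap (R := R) P hmax
  exact IsNoetherianRing.isArtinianRing_of_krullDimLE_zero

theorem artinian_of_nzd [IsLocalRing R] [IsNoetherianRing R] (hdim : ringKrullDim R ≤ 1)
    {x : R} (hx : x ∈ nonZeroDivisors R) : IsArtinianRing (R ⧸ Ideal.span {x}) := by
  have h := (ringKrullDim_quotient_succ_le_of_nonZeroDivisor hx).trans hdim
  rw [isArtinianRing_iff_krullDimLE_zero, Ring.krullDimLE_iff]
  have h2 : ringKrullDim (R ⧸ Ideal.span {x}) + 1 ≤ 0 + 1 := by simpa using h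
  exact ENat.WithBot.add_le_add_one_right_iff.1 h2

theorem FinCol.mono {J K : Ideal R} (h : J ≤ K) (hJ : FinCol J) : FinCol K := by
  refine ne_top_of_le_ne_top hJ ?_
  exact Module.length_le_of_surjective (Submodule.factor h) (Submodule.factor_surjective h)

theorem col_anti {J K : Ideal R} (h : J ≤ K) (hJ : FinCol J) : col K ≤ col J := by
  unfold col
  rw [lenI_eq, lenI_eq]
  exact_mod_cast ENat.toNat_le_toNat
    (Module.length_le_of_surjective (Submodule.factor h) (Submodule.factor_surjective h)) hJ

theorem length_colon (J C : Ideal R) (x : R) (hC : ∀ z, z ∈ C ↔ x * z ∈ J) :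
    Module.length R (R ⧸ J) = Module.length R (R ⧸ C) +
      Module.length R (R ⧸ (J ⊔ Ideal.span {x})) := by
  let f : (R ⧸ C) →ₗ[R] (R ⧸ J) := Submodule.mapQ C J (LinearMap.mulLeft R x)
    (fun z hz => (hC z).1 hz)
  let g : (R ⧸ J) →ₗ[R] (R ⧸ (J ⊔ Ideal.span {x})) := Submodule.factor le_sup_left
  have hf : ∀ z : R, f (Submodule.Quotient.mk z) = Submodule.Quotient.mk (x * z) := fun z => rfl
  have hg : ∀ z : R, g (Submodule.Quotient.mk z) = Submodule.Quotient.mk z := fun z => rfl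
  refine Module.length_eq_add_of_exact f g ?_ (Submodule.factor_surjective _) ?_
  · rw [← LinearMap.ker_eq_bot, LinearMap.ker_eq_bot']
    intro y hy
    obtain ⟨z, rfl⟩ := Submodule.Quotient.mk_surjective _ y
    rw [hf, Submodule.Quotient.mk_eq_zero] at hy
    rw [Submodule.Quotient.mk_eq_zero]
    exact (hC z).2 hy
  · intro y
    obtain ⟨z, rfl⟩ := Submodule.Quotient.mk_surjective _ y
    rw [hg, Submodule.Quotient.mk_eq_zero]
    constructor
    · intro h
      obtain ⟨j, hj, w, hw, rfl⟩ := Submodule.mem_sup.1 h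
      obtain ⟨a, rfl⟩ := Ideal.mem_span_singleton'.1 hw
      refine ⟨Submodule.Quotient.mk a, ?_⟩
      rw [hf, Submodule.Quotient.eq]
      have : x * a - (j + a * x) = -j := by ring
      rw [this]
      exact J.neg_mem hj
    · rintro ⟨w, hw⟩
      obtain ⟨a, rfl⟩ := Submodule.Quotient.mk_surjective _ w
      rw [hf, Submodule.Quotient.eq] at hw
      have : z = -(x * a - z) + a * x := by ring
      rw [this]
      exact Submodule.add_mem_sup (J.neg_mem hw) (Ideal.mem_span_singleton'.2 ⟨a, rfl⟩)

theorem col_colon (J C : Ideal R) (x : R) (hC : ∀ z, z ∈ C ↔ x * z ∈ J) (hJ : FinCol J) :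
    col J = col C + col (J ⊔ Ideal.span {x}) := by
  have h := length_colon J C x hC
  unfold FinCol at hJ
  rw [h] at hJ
  have h1 : Module.length R (R ⧸ C) ≠ ⊤ := fun e => hJ (by rw [e, top_add])
  have h2 : Module.length R (R ⧸ (J ⊔ Ideal.span {x})) ≠ ⊤ := fun e => hJ (by rw [e, add_top])
  unfold col
  rw [lenI_eq, lenI_eq, lenI_eq, h, ENat.toNat_add h1 h2]
  push_cast
  rfl

theorem nzd_colon {x : R} (hx : x ∈ nonZeroDivisors R) (J : Ideal R) (z : R) :
    z ∈ J ↔ x * z ∈ Ideal.span {x} * J := by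
  constructor
  · intro h
    exact Ideal.mul_mem_mul (Ideal.mem_span_singleton_self x) h
  · intro h
    obtain ⟨w, hw, hwz⟩ := Ideal.mem_span_singleton_mul.1 h
    exact (mul_cancel_left_mem_nonZeroDivisors hx).1 hwz ▸ hw

theorem FinCol.mul {x : R} (hx : x ∈ nonZeroDivisors R) {J : Ideal R}
    (h1 : FinCol (Ideal.span {x})) (h2 : FinCol J) : FinCol (Ideal.span {x} * J) := by
  unfold FinCol at *
  rw [length_colon _ J x (nzd_colon hx J), sup_eq_right.2 Ideal.mul_le_left]
  exact WithTop.add_ne_top.2 ⟨h2, h1⟩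

theorem col_mul {x : R} (hx : x ∈ nonZeroDivisors R) {J : Ideal R}
    (h1 : FinCol (Ideal.span {x})) (h2 : FinCol J) :
    col (Ideal.span {x} * J) = col (Ideal.span {x}) + col J := by
  rw [col_colon _ J x (nzd_colon hx J) (FinCol.mul hx h1 h2), sup_eq_right.2 Ideal.mul_le_left,
    add_comm]

theorem col_top : col (⊤ : Ideal R) = 0 := by
  unfold col
  rw [lenI_eq]
  have : Subsingleton (R ⧸ (⊤ : Ideal R)) := Ideal.Quotient.subsingleton_iff.2 rfl
  simp

theorem finCol_top : FinCol (⊤ : Ideal R) := by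
  unfold FinCol
  have : Subsingleton (R ⧸ (⊤ : Ideal R)) := Ideal.Quotient.subsingleton_iff.2 rfl
  simp

theorem col_pow_mul {x : R} (hx : x ∈ nonZeroDivisors R) {J : Ideal R}
    (h1 : FinCol (Ideal.span {x})) (h2 : FinCol J) (k : ℕ) :
    FinCol (Ideal.span {x} ^ k * J) ∧
    col (Ideal.span {x} ^ k * J) = k * col (Ideal.span {x}) + col J := by
  induction k with
  | zero => simpa using h2
  | succ n ih =>
    rw [pow_succ', mul_assoc]
    refine ⟨FinCol.mul hx h1 ih.1, ?_⟩
    rw [col_mul hx h1 ih.1, ih.2]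
    push_cast
    ring

theorem col_prod_mul {s : ℕ} {x : Fin s → R} (hx : ∀ i, x i ∈ nonZeroDivisors R)
    (h1 : ∀ i, FinCol (Ideal.span {x i})) {J : Ideal R} (h2 : FinCol J) (k : Fin s → ℕ) :
    FinCol ((∏ i, Ideal.span {x i} ^ k i) * J) ∧
    col ((∏ i, Ideal.span {x i} ^ k i) * J) = ∑ i, k i * col (Ideal.span {x i}) + col J := by
  classical
  induction (Finset.univ : Finset (Fin s)) using Finset.induction_on with
  | empty => simpa using h2
  | insert i t hi ih =>
    rw [Finset.prod_insert hi, Finset.sum_insert hi, mul_assoc]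
    have := col_pow_mul (hx i) (h1 i) ih.1 (k i)
    refine ⟨this.1, ?_⟩
    rw [this.2, ih.2]
    ring

/-- length of quotient ring -/
theorem col_map (x : R) (J : Ideal R) :
    col (J.map (Ideal.Quotient.mk (Ideal.span {x}))) = col (J ⊔ Ideal.span {x}) := by
  unfold col
  rw [lenI_eq, lenI_eq]
  congr 2
  rw [← Module.length_eq_of_surjective (S := R) (R := R ⧸ Ideal.span {x})
    Ideal.Quotient.mk_surjective]
  exact LinearEquiv.length_eq ((DoubleQuot.quotQuotEquivQuotSupₐ R (Ideal.span {x}) J).toLinearEquiv.trans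
    (Submodule.quotEquivOfEq _ _ (sup_comm _ _)))

end Lengths

section Filt

variable {R : Type*} [CommRing R] {s : ℕ} {I : Fin s → Ideal R}

theorem prodPow_eq_ipw (I : Fin s → Ideal R) (n : Fin s → ℤ) :
    prodPow I n = ipw I (Finsupp.equivFunOnFinite.symm fun j => (n j).toNat) := rfl

theorem superficial [IsLocalRing R] [IsNoetherianRing R]
    [Infinite (IsLocalRing.ResidueField R)]
    (hD : ∀ w : R, (∀ a ∈ maximalIdeal R, a * w = 0) → w = 0)
    (F : AdmissibleFiltration R s I) (i : Fin s) (hI : maximalIdeal R ≤ (I i).radical) :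
    ∃ x ∈ I i, x ∈ nonZeroDivisors R ∧ ∃ N : ℕ, ∀ n : Fin s → ℤ, (∀ j, (N : ℤ) ≤ n j) → ∀ z : R,
      x * z ∈ F.F (n + Pi.single i 1) → z ∈ F.F n := by
  obtain ⟨m, hm0, hm⟩ := F.admissible
  obtain ⟨x, hx, hxn, N, hN⟩ := superficial_nat hD I i hI (F.F m)
  refine ⟨x, hx, hxn, N + ∑ j, (m j).toNat, ?_⟩
  intro n hn z hz
  have hn' : ∀ j, (N : ℤ) + m j ≤ n j := by
    intro j
    have h1 := Finset.single_le_sum (f := fun j => (m j).toNat) (fun _ _ => Nat.zero_le _)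
      (Finset.mem_univ j)
    have h2 := hn j
    push_cast at h2
    have h3 : (((m j).toNat : ℕ) : ℤ) ≤ ∑ j, ((m j).toNat : ℤ) := by exact_mod_cast h1
    have h4 := Int.self_le_toNat (m j)
    linarith
  have hnm : ∀ j, (N : ℤ) ≤ (n - m) j := fun j => by
    have := hn' j
    simp only [Pi.sub_apply]; omega
  have h1 : F.F n = prodPow I (n - m) * F.F m := by
    rw [← hm (n - m) (fun j => by have := hnm j; simp only [Pi.zero_apply]; omega)]
    simp
  have h2 : F.F (n + Pi.single i 1) = prodPow I (n - m + Pi.single i 1) * F.F m := by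
    rw [← hm (n - m + Pi.single i 1) ?_]
    · congr 1; abel
    · intro j
      have := hnm j
      by_cases hj : j = i
      · subst hj; simp at this ⊢; omega
      · simp [hj] at this ⊢; omega
  rw [h1, prodPow_eq_ipw]
  rw [h2, prodPow_eq_ipw] at hz
  refine hN _ ?_ z ?_
  · intro j
    have := hnm j
    simp only [cst_apply, Finsupp.equivFunOnFinite_symm_apply_apply]
    omega
  · convert hz using 3
    ext j
    have := hnm j
    by_cases hj : j = i
    · subst hj; simp at this ⊢; omega
    · simp [hj, Ne.symm hj] at this ⊢

theorem F_zero (F : AdmissibleFiltration R s I) : F.F 0 = ⊤ := by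
  rw [eq_top_iff]
  refine le_trans ?_ (F.prodPow_le 0)
  simp [prodPow]

theorem finCol_F [IsLocalRing R] [IsNoetherianRing R] (hI : ∀ i, IsMPrimary R (I i))
    (F : AdmissibleFiltration R s I) (n : Fin s → ℤ) : FinCol (F.F n) := by
  refine FinCol.mono (F.prodPow_le n) ?_
  have : maximalIdeal R ≤ (prodPow I n).radical := by
    have key : ∀ t : Finset (Fin s), maximalIdeal R ≤ (∏ i ∈ t, I i ^ (n i).toNat).radical := by
      intro t
      classical
      induction t using Finset.induction_on with
      | empty => rw [Finset.prod_empty, Ideal.one_eq_top]; exact le_top.trans Ideal.le_radical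
      | insert i t hi ih =>
        rw [Finset.prod_insert hi, Ideal.radical_mul]
        refine le_inf ?_ ih
        rcases Nat.eq_zero_or_pos (n i).toNat with h | h
        · rw [h, pow_zero, Ideal.one_eq_top]; exact le_top.trans Ideal.le_radical
        · rw [Ideal.radical_pow _ h.ne']
          exact (hI i).2
    exact key Finset.univ
  have := artinian_of_radical this
  exact FinCol.of_artinian

theorem mul_pow_mem (F : AdmissibleFiltration R s I) (x : Fin s → R) (hx : ∀ i, x i ∈ I i)
    (k : Fin s → ℕ) : (∏ i, Ideal.span {x i} ^ k i) ≤ F.F (fun i => (k i : ℤ)) := by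
  refine le_trans ?_ (F.prodPow_le _)
  unfold prodPow
  refine Finset.prod_le_prod' ?_
  intro i _
  simp only [Int.toNat_natCast]
  exact Ideal.pow_right_mono ((Ideal.span_singleton_le_iff_mem _).2 (hx i)) _

theorem F_le_span [IsLocalRing R] [IsNoetherianRing R] (hI : ∀ i, IsMPrimary R (I i))
    (F : AdmissibleFiltration R s I) (i : Fin s) (J : Ideal R) [IsArtinianRing (R ⧸ J)] :
    ∃ N : ℕ, ∀ n : Fin s → ℤ, (∀ j, (N : ℤ) ≤ n j) → F.F n ≤ J := by
  obtain ⟨q, hq⟩ := exists_maximalIdeal_pow_le_of_isArtinianRing_quotient J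
  obtain ⟨m, hm0, hm⟩ := F.admissible
  refine ⟨q + (m i).toNat + ∑ j, (m j).toNat, ?_⟩
  intro n hn
  let n0 : Fin s → ℤ := fun _ => q
  have h1 : n0 + m ≤ n := by
    intro j
    have h1 := Finset.single_le_sum (f := fun j => (m j).toNat) (fun _ _ => Nat.zero_le _)
      (Finset.mem_univ j)
    have h2 := hn j
    push_cast at h2
    have h3 : (((m j).toNat : ℕ) : ℤ) ≤ ∑ j, ((m j).toNat : ℤ) := by exact_mod_cast h1
    have h4 := Int.self_le_toNat (m j)
    have h5 : (0 : ℤ) ≤ ((m i).toNat : ℤ) := Int.natCast_nonneg _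
    simp only [Pi.add_apply, n0]
    omega
  refine (F.antitone _ _ h1).trans ?_
  rw [hm n0 (fun j => by simp [n0])]
  refine Ideal.mul_le_left.trans ?_
  refine le_trans ?_ hq
  unfold prodPow
  refine (Ideal.prod_le_inf.trans (Finset.inf_le (Finset.mem_univ i))).trans ?_
  simp only [n0, Int.toNat_natCast]
  exact Ideal.pow_right_mono (IsLocalRing.le_maximalIdeal (hI i).1) q

theorem dim_one [IsLocalRing R] [IsNoetherianRing R]
    [Infinite (IsLocalRing.ResidueField R)]
    (hD : ∀ w : R, (∀ a ∈ maximalIdeal R, a * w = 0) → w = 0)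
    (hdim : ringKrullDim R ≤ 1) (hI : ∀ i, IsMPrimary R (I i))
    (F : AdmissibleFiltration R s I) (a : Fin s → ℤ) (N : ℕ)
    (hN : ∀ n : Fin s → ℤ, (∀ j, (N : ℤ) ≤ n j) → col (F.F n) = ∑ j, a j * n j)
    (n : Fin s → ℤ) (hn : 0 ≤ n) : col (F.F n) = ∑ j, a j * n j := by
  choose x hxI hxn M hM using fun i => superficial hD F i (hI i).2
  have hart : ∀ i, IsArtinianRing (R ⧸ Ideal.span {x i}) := fun i => artinian_of_nzd hdim (hxn i)
  have hfc : ∀ i, FinCol (Ideal.span {x i}) := fun i => FinCol.of_artinian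
  have hai : ∀ i, col (Ideal.span {x i}) = a i := by
    intro i
    obtain ⟨K, hK⟩ := F_le_span hI F i (Ideal.span {x i})
    let b : Fin s → ℤ := fun _ => (N + M i + K : ℕ)
    have hbb : ∀ j, b j ≤ (b + Pi.single i 1 : Fin s → ℤ) j := by
      intro j
      by_cases hj : j = i
      · subst hj; simp
      · simp [hj]
    have hb : ∀ j, (N : ℤ) ≤ b j ∧ (M i : ℤ) ≤ b j ∧ (K : ℤ) ≤ b j := by
      intro j
      simp only [b]
      push_cast
      refine ⟨?_, ?_, ?_⟩ <;> omega
    have h1 := hN b (fun j => (hb j).1)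
    have h2 := hN (b + Pi.single i 1) (fun j => (hb j).1.trans (hbb j))
    have h3 := hK (b + Pi.single i 1) (fun j => (hb j).2.2.trans (hbb j))
    have h4 := col_colon (F.F (b + Pi.single i 1)) (F.F b) (x i) (fun z => ⟨fun hz => by
      have hx1 : x i ∈ F.F (Pi.single i 1) := by
        apply F.prodPow_le
        unfold prodPow
        rw [Finset.prod_eq_single i]
        · simpa using hxI i
        · intro j _ hj
          simp [hj]
        · simp
      rw [add_comm]
      exact F.mul_le _ _ (Ideal.mul_mem_mul hx1 hz), hM i b (fun j => (hb j).2.1) z⟩)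
      (finCol_F hI F _)
    rw [sup_eq_right.2 h3, h1, h2] at h4
    have h5 : ∑ j, a j * (b + Pi.single i 1 : Fin s → ℤ) j = ∑ j, a j * b j + a i := by
      simp [mul_add, Finset.sum_add_distrib, Pi.single_apply]
    linarith
  let k : Fin s → ℕ := fun j => (n j).toNat
  have hk : ∀ j, (k j : ℤ) = n j := fun j => Int.toNat_of_nonneg (hn j)
  have hk' : (fun j => (k j : ℤ)) = n := funext hk
  apply le_antisymm
  · have h := col_prod_mul hxn hfc finCol_top k
    rw [Ideal.mul_top, col_top, add_zero] at h
    have h2 := mul_pow_mem F x hxI k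
    rw [hk'] at h2
    have h3 := col_anti h2 h.1
    rw [h.2] at h3
    refine h3.trans (le_of_eq ?_)
    refine Finset.sum_congr rfl fun j _ => ?_
    rw [hk, hai]; ring
  · have h := col_prod_mul hxn hfc (finCol_F hI F n) (fun _ => N)
    have h2 := mul_pow_mem F x hxI (fun _ => N)
    have h3 := col_anti ((Ideal.mul_mono_left h2).trans (F.mul_le _ n)) h.1
    rw [h.2, hN _ (fun j => by have := hn j; simp only [Pi.zero_apply, Pi.add_apply] at *; omega)] at h3
    simp only [hai, Pi.add_apply, mul_add, Finset.sum_add_distrib] at h3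
    have h4 : ∑ j, a j * (N : ℤ) = ∑ j, (N : ℤ) * a j :=
      Finset.sum_congr rfl fun j _ => by ring
    linarith

end Filt

section Poly

theorem choose_sub_one_zero (k : ℕ) (hk : k ≠ 0) : Ring.choose ((0:ℤ) + (k : ℤ) - 1) k = 0 := by
  obtain ⟨m, rfl⟩ := Nat.exists_eq_succ_of_ne_zero hk
  have : ((0:ℤ) + ((m.succ : ℕ) : ℤ) - 1) = ((m : ℕ) : ℤ) := by push_cast; ring
  rw [this, Ring.choose_natCast, Nat.choose_succ_self]; rfl

theorem choose_one' (m : ℤ) : Ring.choose m 1 = m := Ring.choose_one_right m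

theorem choose_two_diff (m : ℤ) :
    Ring.choose (m + 1 + 2 - 1) 2 - Ring.choose (m + 2 - 1) 2 = m + 1 := by
  have h := Ring.choose_succ_succ (m + 1) 1
  have e1 : m + 1 + 2 - 1 = m + 1 + 1 := by ring
  have e2 : m + 2 - 1 = m + 1 := by ring
  rw [e1, e2]
  norm_num at h
  linarith

theorem hilbPoly_zero (s d : ℕ) (c : (Fin s → ℕ) → ℤ) :
    hilbPoly s d c 0 = (-1)^d * c (fun _ => 0) := by
  unfold hilbPoly
  rw [Finset.sum_eq_single (fun _ => 0)]
  · simp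
  · intro α _ hα
    obtain ⟨i, hi⟩ := Function.ne_iff.1 hα
    rw [Finset.prod_eq_zero (Finset.mem_univ i), mul_zero]
    refine choose_sub_one_zero _ ?_
    intro h; apply hi; ext; simpa using h
  · simp

theorem exists_lin_sum {ι : Type*} {s : ℕ} (S : Finset ι) (f : ι → (Fin s → ℤ) → ℤ)
    (h : ∀ α ∈ S, ∃ a : Fin s → ℤ, ∀ n, f α n = ∑ j, a j * n j) :
    ∃ a : Fin s → ℤ, ∀ n, ∑ α ∈ S, f α n = ∑ j, a j * n j := by
  choose! a ha using h
  refine ⟨fun j => ∑ α ∈ S, a α j, fun n => ?_⟩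
  rw [Finset.sum_congr rfl fun α hα => ha α hα n, Finset.sum_comm]
  simp [Finset.sum_mul]

theorem lin_single {s : ℕ} (b : ℤ) (j : Fin s) :
    ∃ a : Fin s → ℤ, ∀ n : Fin s → ℤ, b * n j = ∑ k, a k * n k :=
  ⟨Pi.single j b, fun n => by simp [Pi.single_apply]⟩

theorem lin_zero {s : ℕ} : ∃ a : Fin s → ℤ, ∀ n : Fin s → ℤ, (0:ℤ) = ∑ k, a k * n k :=
  ⟨0, fun n => by simp⟩

theorem nat_vec_le_one {s : ℕ} (α : Fin s → ℕ) (h : ∑ i, α i ≤ 1) (h0 : α ≠ 0) :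
    ∃ j, α = Pi.single j 1 := by
  obtain ⟨j, hj⟩ := Function.ne_iff.1 h0
  refine ⟨j, ?_⟩
  have h1 := Finset.add_sum_erase Finset.univ α (Finset.mem_univ j)
  simp only [Pi.zero_apply] at hj
  have h2 : ∑ i ∈ Finset.univ.erase j, α i = 0 := by omega
  rw [Finset.sum_eq_zero_iff] at h2
  ext k
  by_cases hk : k = j
  · subst hk; simp; omega
  · simp [hk]; exact h2 k (by simp [hk])

theorem prod_choose_single {s : ℕ} (n : Fin s → ℤ) (j : Fin s) :
    ∏ i, Ring.choose (n i + (((Pi.single j 1 : Fin s → ℕ) i : ℕ) : ℤ) - 1)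
      ((Pi.single j 1 : Fin s → ℕ) i) = n j := by
  rw [Finset.prod_eq_single j]
  · simp
  · intro k _ hk; simp [hk]
  · simp

theorem hilbPoly_one {s : ℕ} (c : (Fin s → ℕ) → ℤ) (h0 : c 0 = 0) :
    ∃ a : Fin s → ℤ, ∀ n, hilbPoly s 1 c n = ∑ j, a j * n j := by
  unfold hilbPoly
  refine exists_lin_sum _ _ ?_
  intro α hα
  simp only [Finset.mem_filter, Finset.mem_univ, true_and] at hα
  generalize hβ : (fun i => (α i : ℕ)) = β
  have hβ' : ∀ i, (α i : ℕ) = β i := fun i => congrFun hβ i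
  simp only [hβ'] at hα ⊢
  by_cases hz : β = 0
  · subst hz; simpa [h0] using lin_zero
  · obtain ⟨j, rfl⟩ := nat_vec_le_one β hα hz
    simp only [prod_choose_single]
    exact lin_single _ j

theorem hilbPoly_two {s : ℕ} (c : (Fin s → ℕ) → ℤ) (i : Fin s) (h0 : c (Pi.single i 1) = 0) :
    ∃ a : Fin s → ℤ, ∀ n, hilbPoly s 2 c n - hilbPoly s 2 c (n - Pi.single i 1)
      = ∑ j, a j * n j := by
  unfold hilbPoly
  simp only [← Finset.sum_sub_distrib]
  refine exists_lin_sum _ _ ?_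
  intro α hα
  simp only [Finset.mem_filter, Finset.mem_univ, true_and] at hα
  generalize hβ : (fun i => (α i : ℕ)) = β
  have hβ' : ∀ i, (α i : ℕ) = β i := fun i => congrFun hβ i
  simp only [hβ'] at hα ⊢
  simp only [← mul_sub]
  have key : ∀ n : Fin s → ℤ, 
      ∏ k, Ring.choose (n k + (β k : ℤ) - 1) (β k)
      - ∏ k, Ring.choose ((n - Pi.single i 1 : Fin s → ℤ) k + (β k : ℤ) - 1) (β k)
      = (Ring.choose (n i + (β i : ℤ) - 1) (β i) - Ring.choose (n i - 1 + (β i : ℤ) - 1) (β i))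
        * ∏ k ∈ Finset.univ.erase i, Ring.choose (n k + (β k : ℤ) - 1) (β k) := by
    intro n
    rw [← Finset.mul_prod_erase _ _ (Finset.mem_univ i), 
      ← Finset.mul_prod_erase _ _ (Finset.mem_univ i), sub_mul]
    congr 2
    · simp
    · refine Finset.prod_congr rfl fun k hk => ?_
      simp [Finset.ne_of_mem_erase hk]
  simp only [key]
  have hs := Finset.add_sum_erase Finset.univ β (Finset.mem_univ i)
  rcases Nat.lt_trichotomy (β i) 1 with h | h | h
  · have : β i = 0 := by omega
    simpa [this] using lin_zero
  · by_cases hz : β = Pi.single i 1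
    · subst hz; simpa [h0] using lin_zero
    · have h1 : ∑ k ∈ Finset.univ.erase i, β k ≤ 1 := by omega
      let γ : Fin s → ℕ := β - Pi.single i 1
      have hγ : β = γ + Pi.single i 1 := by
        ext k
        by_cases hk : k = i
        · subst hk; simp [γ]; omega
        · simp [γ, hk]
      have hγi : γ i = 0 := by simp [γ, h]
      have hγ1 : ∑ k, γ k ≤ 1 := by
        rw [← Finset.add_sum_erase Finset.univ γ (Finset.mem_univ i), hγi, zero_add]
        refine le_trans (le_of_eq ?_) h1
        refine Finset.sum_congr rfl fun k hk => ?_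
        simp [γ, Finset.ne_of_mem_erase hk]
      have hγ0 : γ ≠ 0 := by
        intro h'; apply hz; rw [hγ, h', zero_add]
      obtain ⟨j, hj⟩ := nat_vec_le_one γ hγ1 hγ0
      have key2 : ∀ n : Fin s → ℤ, 
          ∏ k ∈ Finset.univ.erase i, Ring.choose (n k + (β k : ℤ) - 1) (β k) = n j := by
        intro n
        rw [← prod_choose_single n j, ← hj, ← Finset.mul_prod_erase _ _ (Finset.mem_univ i), hγi]
        simp only [Ring.choose_zero_right, one_mul]
        refine Finset.prod_congr rfl fun k hk => ?_
        simp [γ, Finset.ne_of_mem_erase hk]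
      simp only [key2, h]
      have : ∀ m : ℤ, Ring.choose (m + ((1:ℕ):ℤ) - 1) 1 - Ring.choose (m - 1 + ((1:ℕ):ℤ) - 1) 1 = 1 := by
        intro m; simp
      simp only [this, one_mul]
      exact lin_single _ j
  · have h2 : β i = 2 := by omega
    have h3 : ∑ k ∈ Finset.univ.erase i, β k = 0 := by omega
    rw [Finset.sum_eq_zero_iff] at h3
    have key2 : ∀ n : Fin s → ℤ, 
          ∏ k ∈ Finset.univ.erase i, Ring.choose (n k + (β k : ℤ) - 1) (β k) = 1 := by
      intro n
      refine Finset.prod_eq_one fun k hk => ?_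
      rw [h3 k hk]; simp
    simp only [key2, h2, mul_one]
    have : ∀ m : ℤ, Ring.choose (m + ((2:ℕ):ℤ) - 1) 2 - Ring.choose (m - 1 + ((2:ℕ):ℤ) - 1) 2 = m := by
      intro m
      have := choose_two_diff (m - 1)
      simpa using this
    simp only [this]
    exact lin_single _ i

end Poly

section Quot

variable {R : Type*} [CommRing R] {s : ℕ} {I : Fin s → Ideal R}

theorem depth_one [IsLocalRing R] (d : ℕ) (hd : 1 ≤ d) (hdim : ringKrullDim R = d)
    (hCM : IsCMLocal R) : ∀ w : R, (∀ a ∈ maximalIdeal R, a * w = 0) → w = 0 := by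
  obtain ⟨rs, hm, hr, hl⟩ := hCM
  rw [hdim] at hl
  have hl' : rs.length = d := by exact_mod_cast hl
  match rs, hm, hr, hl' with
  | [], _, _, h => simp at h; omega
  | a :: t, hm, hr, _ =>
    intro w hw
    have h1 := ((RingTheory.Sequence.isRegular_cons_iff R a t).1 hr).1
    have h2 := hw a (hm a (by simp))
    exact h1 (by simpa using h2)

theorem depth_two [IsLocalRing R] (hdim : ringKrullDim R = (2 : ℕ))
    (hCM : IsCMLocal R) (x : R) (hxn : x ∈ nonZeroDivisors R) :
    ∀ w : R, (∀ a ∈ maximalIdeal R, a * w ∈ Ideal.span {x}) → w ∈ Ideal.span {x} := by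
  obtain ⟨rs, hm, hr, hl⟩ := hCM
  rw [hdim] at hl
  have hl' : rs.length = 2 := by exact_mod_cast hl
  match rs, hm, hr, hl' with
  | [], _, _, h => simp at h
  | [_], _, _, h => simp at h
  | a :: b :: t, hm, hr, _ =>
    intro w hw
    have h1 := ((RingTheory.Sequence.isRegular_cons_iff R a _).1 hr)
    have h2 := ((RingTheory.Sequence.isRegular_cons_iff _ b t).1 h1.2).1
    have h1 := h1.1
    obtain ⟨u, hu⟩ := Ideal.mem_span_singleton'.1 (hw a (hm a (by simp)))
    obtain ⟨v, hv⟩ := Ideal.mem_span_singleton'.1 (hw b (hm b (by simp)))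
    have hx0 : ∀ y, x * y = 0 → y = 0 := (mem_nonZeroDivisors_iff.1 hxn).1
    · have h3 : b * u = a * v := by
        have : x * (b * u - a * v) = 0 := by linear_combination b * hu - a * hv
        exact sub_eq_zero.1 (hx0 _ this)
      have h4 : (Submodule.Quotient.mk u : QuotSMulTop a R) = 0 := by
        apply h2
        simp only [smul_zero]
        rw [← Submodule.Quotient.mk_smul, Submodule.Quotient.mk_eq_zero, smul_eq_mul, h3]
        exact Submodule.mem_smul_pointwise_iff_exists _ _ _ |>.2 ⟨v, trivial, rfl⟩
      rw [Submodule.Quotient.mk_eq_zero] at h4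
      obtain ⟨u', -, hu'⟩ := (Submodule.mem_smul_pointwise_iff_exists _ _ _).1 h4
      have hu' : a * u' = u := hu'
      refine Ideal.mem_span_singleton'.2 ⟨u', ?_⟩
      apply h1
      change a * (u' * x) = a * w
      rw [← hu, ← hu']; ring

theorem prodPow_map (I : Fin s → Ideal R) (J : Ideal R) (n : Fin s → ℤ) :
    prodPow (fun j => (I j).map (Ideal.Quotient.mk J)) n
        = (prodPow I n).map (Ideal.Quotient.mk J) := by
  have h := map_prod (Ideal.mapHom (Ideal.Quotient.mk J)) (fun i => I i ^ (n i).toNat) Finset.univ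
  simp only [map_pow] at h
  exact h.symm

/-- quotient filtration -/
noncomputable def quotFilt (F : AdmissibleFiltration R s I) (J : Ideal R) :
    AdmissibleFiltration (R ⧸ J) s (fun j => (I j).map (Ideal.Quotient.mk J)) where
  F n := (F.F n).map (Ideal.Quotient.mk J)
  prodPow_le n := by
    rw [prodPow_map]
    exact Ideal.map_mono (F.prodPow_le n)
  mul_le m n := by
    rw [← Ideal.map_mul]
    exact Ideal.map_mono (F.mul_le m n)
  antitone m n h := Ideal.map_mono (F.antitone m n h)
  plus_eq n := by rw [F.plus_eq n]
  admissible := by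
    obtain ⟨m, hm0, hm⟩ := F.admissible
    refine ⟨m, hm0, fun n hn => ?_⟩
    rw [prodPow_map, hm n hn, Ideal.map_mul]

theorem dim_two_step [IsLocalRing R] [IsNoetherianRing R]
    [Infinite (IsLocalRing.ResidueField R)]
    (hdim : ringKrullDim R = (2 : ℕ)) (hCM : IsCMLocal R) (hI : ∀ i, IsMPrimary R (I i))
    (F : AdmissibleFiltration R s I) (hH : H1ReesVanishes F) (i : Fin s) (a : Fin s → ℤ) (N : ℕ)
    (hN : ∀ n : Fin s → ℤ, (∀ j, (N : ℤ) ≤ n j) →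
      col (F.F n) - col (F.F (n - Pi.single i 1)) = ∑ j, a j * n j)
    (n : Fin s → ℤ) (hn : 0 ≤ n) :
    col (F.F (n + Pi.single i 1)) - col (F.F n) = ∑ j, a j * (n + Pi.single i 1 : Fin s → ℤ) j := by
  have hD := depth_one 2 (by norm_num) hdim hCM
  obtain ⟨x, hxI, hxn, M, hM⟩ := superficial hD F i (hI i).2
  have hx1 : x ∈ F.F (Pi.single i 1) := by
    apply F.prodPow_le
    unfold prodPow
    rw [Finset.prod_eq_single i]
    · simpa using hxI
    · intro j _ hj
      simp [hj]
    · simp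
  have hxm : x ∈ maximalIdeal R := IsLocalRing.le_maximalIdeal (hI i).1 hxI
  have hspan : Ideal.span {x} ≤ maximalIdeal R := (Ideal.span_singleton_le_iff_mem _).2 hxm
  have hcolon : ∀ n : Fin s → ℤ, 0 ≤ n → ∀ z, z ∈ F.F n ↔ x * z ∈ F.F (n + Pi.single i 1) := by
    intro n hn z
    constructor
    · intro hz
      rw [add_comm]
      exact F.mul_le _ _ (Ideal.mul_mem_mul hx1 hz)
    · intro hz
      rw [← hH n hn]
      refine Submodule.mem_iSup_of_mem M ?_
      rw [Submodule.mem_colon]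
      intro w hw
      have hw' : w ∈ F.F ((M + 1 : ℕ) • evec s) := by
        have : ∀ k : ℕ, F.F (evec s) ^ k ≤ F.F ((k : ℕ) • evec s) := by
          intro k
          induction k with
          | zero => simp [F_zero]
          | succ k ih =>
            rw [pow_succ, succ_nsmul]
            exact (Ideal.mul_mono_left ih).trans (F.mul_le _ _)
        exact this _ hw
      refine hM _ ?_ _ ?_
      · intro j
        have := hn j
        simp [evec] at this ⊢
        omega
      · have h := F.mul_le _ _ (Ideal.mul_mem_mul hz hw')
        have e1 : n + Pi.single i 1 + (M + 1) • evec s = n + (M + 1) • evec s + Pi.single i 1 := by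
          abel
        rw [e1] at h
        rw [smul_eq_mul, ← mul_assoc]
        exact h
  have hstep : ∀ n : Fin s → ℤ, 0 ≤ n → col (F.F (n + Pi.single i 1)) - col (F.F n)
      = col ((quotFilt F (Ideal.span {x})).F (n + Pi.single i 1)) := by
    intro n hn
    have h4 := col_colon _ _ x (hcolon n hn) (finCol_F hI F _)
    change _ = col ((F.F (n + Pi.single i 1)).map _)
    rw [col_map]
    linarith
  have hnt : Nontrivial (R ⧸ Ideal.span {x}) :=
    Ideal.Quotient.nontrivial_iff.2 fun h => by
      rw [h] at hspan
      exact (IsLocalRing.maximalIdeal.isMaximal R).ne_top (top_le_iff.1 hspan)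
  have hsurj : Function.Surjective (Ideal.Quotient.mk (Ideal.span {x})) :=
    Ideal.Quotient.mk_surjective
  have hloc : IsLocalRing (R ⧸ Ideal.span {x}) := IsLocalRing.of_surjective' _ hsurj
  have hlh : IsLocalHom (Ideal.Quotient.mk (Ideal.span {x})) := .of_surjective _ hsurj
  have hinf : Infinite (IsLocalRing.ResidueField (R ⧸ Ideal.span {x})) :=
    Infinite.of_injective (IsLocalRing.ResidueField.map (Ideal.Quotient.mk (Ideal.span {x})))
      (RingHom.injective _)
  have hmm := IsLocalRing.map_maximalIdeal_of_surjective _ hsurj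
  have hdim' : ringKrullDim (R ⧸ Ideal.span {x}) ≤ 1 := by
    have h := ringKrullDim_quotient_succ_le_of_nonZeroDivisor hxn
    rw [hdim] at h
    have h2 : ringKrullDim (R ⧸ Ideal.span {x}) + 1 ≤ 1 + 1 := by
      refine h.trans (le_of_eq ?_)
      norm_num
    exact ENat.WithBot.add_le_add_one_right_iff.1 h2
  have hI' : ∀ j, IsMPrimary (R ⧸ Ideal.span {x}) ((I j).map (Ideal.Quotient.mk (Ideal.span {x}))) := by
    intro j
    constructor
    · intro h
      have : (I j).map (Ideal.Quotient.mk (Ideal.span {x})) ≤ maximalIdeal _ := by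
        rw [← hmm]
        exact Ideal.map_mono (IsLocalRing.le_maximalIdeal (hI j).1)
      rw [h] at this
      exact (IsLocalRing.maximalIdeal.isMaximal _).ne_top (top_le_iff.1 this)
    · rw [← hmm]
      exact (Ideal.map_mono (hI j).2).trans (Ideal.map_radical_le _)
  have hD' : ∀ w : R ⧸ Ideal.span {x}, (∀ a ∈ maximalIdeal _, a * w = 0) → w = 0 := by
    intro w hw
    obtain ⟨w, rfl⟩ := hsurj w
    rw [Ideal.Quotient.eq_zero_iff_mem]
    refine depth_two hdim hCM x hxn w fun a ha => ?_
    rw [← Ideal.Quotient.eq_zero_iff_mem, map_mul]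
    apply hw
    rw [← hmm]
    exact Ideal.mem_map_of_mem _ ha
  rw [hstep n hn]
  refine dim_one hD' hdim' hI' (quotFilt F (Ideal.span {x})) a (N + 1) ?_ _ ?_
  · intro n hn
    rw [← hN n (fun j => by have := hn j; push_cast at this; omega)]
    have h0 : 0 ≤ n - Pi.single i 1 := by
      intro j
      have := hn j
      push_cast at this
      by_cases hj : j = i
      · subst hj; simp; omega
      · simp [hj]; omega
    have h := hstep _ h0
    rw [sub_add_cancel] at h
    exact h.symm
  · intro j
    have := hn j
    by_cases hj : j = i
    · subst hj; simp at this ⊢; omega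
    · simp [hj] at this ⊢; omega

theorem dim_two [IsLocalRing R] [IsNoetherianRing R]
    [Infinite (IsLocalRing.ResidueField R)]
    (hdim : ringKrullDim R = (2 : ℕ)) (hCM : IsCMLocal R) (hI : ∀ i, IsMPrimary R (I i))
    (F : AdmissibleFiltration R s I) (hH : H1ReesVanishes F) (c : (Fin s → ℕ) → ℤ)
    (hc : IsHilbCoeffs F 2 c) (hzero : ∀ i : Fin s, c (Pi.single i 1) = 0)
    (n : Fin s → ℤ) (hn : 0 ≤ n) : hilbPoly s 2 c n = col (F.F n) := by
  obtain ⟨N, hN⟩ := hc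
  replace hN : ∀ n : Fin s → ℤ, (∀ i, (N : ℤ) ≤ n i) → hilbPoly s 2 c n = col (F.F n) := hN
  have hstep : ∀ i (n : Fin s → ℤ), 0 ≤ n → hilbPoly s 2 c (n + Pi.single i 1) =
      col (F.F (n + Pi.single i 1)) → hilbPoly s 2 c n = col (F.F n) := by
    intro i n hn h
    obtain ⟨a, ha⟩ := hilbPoly_two c i (hzero i)
    have h1 := dim_two_step hdim hCM hI F hH i a (N + 1) (fun m hm => by
      rw [← ha, hN m (fun j => by have := hm j; push_cast at this; omega),
        hN (m - Pi.single i 1) (fun j => by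
          have := hm j
          push_cast at this
          by_cases hj : j = i
          · subst hj; simp; omega
          · simp [hj]; omega)]) n hn
    have h2 := ha (n + Pi.single i 1)
    rw [add_sub_cancel_right] at h2
    linarith
  have hk : ∀ (k : ℕ) i (n : Fin s → ℤ), 0 ≤ n → hilbPoly s 2 c (n + Pi.single i (k : ℤ)) =
      col (F.F (n + Pi.single i (k : ℤ))) → hilbPoly s 2 c n = col (F.F n) := by
    intro k i
    induction k with
    | zero => intro n hn h; simpa using h
    | succ k ih =>
      intro n hn h
      refine ih n hn (hstep i _ ?_ ?_)
      · exact add_nonneg hn (Pi.single_nonneg.2 (by positivity))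
      · rw [add_assoc, ← Pi.single_add]
        push_cast at h
        exact h
  have ht : ∀ (t : Finset (Fin s)) (n : Fin s → ℤ), 0 ≤ n →
      hilbPoly s 2 c (n + ∑ i ∈ t, Pi.single i (N : ℤ)) =
      col (F.F (n + ∑ i ∈ t, Pi.single i (N : ℤ))) → hilbPoly s 2 c n = col (F.F n) := by
    intro t
    classical
    induction t using Finset.induction_on with
    | empty => intro n hn h; simpa using h
    | insert i t hi ih =>
      intro n hn h
      refine hk N i n hn (ih _ ?_ ?_)
      · exact add_nonneg hn (Pi.single_nonneg.2 (by positivity))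
      · rw [Finset.sum_insert hi, ← add_assoc] at h
        exact h
  refine ht Finset.univ n hn (hN _ fun j => ?_)
  have := hn j
  rw [Finset.univ_sum_single (fun _ => (N : ℤ))]
  simp only [Pi.add_apply, Pi.zero_apply] at this ⊢
  omega

end Quot

/-- STATEMENT 13: Let `(R,m)` be Cohen–Macaulay local of dimension `1 ≤ d ≤ 2` with
infinite residue field, `I₁,…,I_s` `m`-primary, `F` an `I`-admissible filtration with
Hilbert coefficients `c`, and suppose `e_{(d−1)e_i}(F) = 0` for `i = 1,…,s`.  Then:
(1) if `d = 1` then `P_F(n) = H_F(n)` for all `n ∈ ℕˢ`;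
(2) if `d = 2` and `H¹_{R₊₊}(R(F))_n = 0` for all `n ∈ ℕˢ` (by Proposition 4.1 of the
    paper this is the condition `F̆(n) = F(n)` for all `n ≥ 0`), then
    `P_F(n) = H_F(n)` for all `n ∈ ℕˢ` and `e_{(0,…,0)}(F) = 0`. -/
theorem vanishing_coeffs_postulation
    (R : Type*) [CommRing R] [IsLocalRing R] [IsNoetherianRing R]
    [Infinite (IsLocalRing.ResidueField R)]
    (d s : ℕ) (hd1 : 1 ≤ d) (hd2 : d ≤ 2)
    (hdim : ringKrullDim R = d) (hCM : IsCMLocal R)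
    (I : Fin s → Ideal R) (hI : ∀ i, IsMPrimary R (I i))
    (F : AdmissibleFiltration R s I)
    (c : (Fin s → ℕ) → ℤ) (hc : IsHilbCoeffs F d c)
    (hzero : ∀ i : Fin s, c (fun j => if j = i then d - 1 else 0) = 0) :
    (d = 1 → ∀ n : Fin s → ℤ, 0 ≤ n → hilbPoly s d c n = hilbFn F n)
    ∧ (d = 2 → H1ReesVanishes F →
        (∀ n : Fin s → ℤ, 0 ≤ n → hilbPoly s d c n = hilbFn F n)
        ∧ c (fun _ => 0) = 0) := by
  refine ⟨?_, ?_⟩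
  · rintro rfl n hn
    obtain ⟨N, hN⟩ := hc
    rcases Nat.eq_zero_or_pos s with rfl | hs
    · exact hN n (fun i => i.elim0)
    · have h0 : c 0 = 0 := by
        rw [← hzero ⟨0, hs⟩]
        congr 1
        ext j
        simp
      obtain ⟨a, ha⟩ := hilbPoly_one c h0
      rw [ha]
      refine (dim_one (depth_one 1 le_rfl hdim hCM) (by rw [hdim]; simp) hI F a N ?_ n hn).symm
      intro m hm
      rw [← ha]
      exact (hN m hm).symm
  · rintro rfl hH
    have hP := dim_two hdim hCM hI F hH c hc (fun i => by
      rw [← hzero i]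
      congr 1
      ext j
      simp [Pi.single_apply])
    refine ⟨hP, ?_⟩
    have h1 := hP 0 le_rfl
    rw [hilbPoly_zero, F_zero, col_top] at h1
    simpa using h1
end
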